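/- arXiv:1004.3713 — 2 statements merged into one kernel-verified Lean document; each statement's English description precedes it below -/
import Mathlib

section
/- Assume (A1), (A2) and (A3). Let x ∈ D_I. If liminf_{n→∞} (log k(n))/n > I(x), then with probability 1, lim_{ε→0⁺} liminf_{n→∞} (1/n) log μ_n^ω(B(x,ε)) = lim_{ε→0⁺} limsup_{n→∞} (1/n) log μ_n^ω(B(x,ε)) = −I(x), where B(x,ε) is the closed ball of center x and radius ε. (Theorem 3(1), first part.) -/
open MeasureTheory ProbabilityTheory Filter Set Real
open scoped ENNReal NNReal Classical Topology

/-- Borel–Cantelli for events whose probabilities eventually decay exponentially. -/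
lemma ae_eventually_notMem_of_exp_bound {Ω : Type*} [MeasurableSpace Ω] (P : Measure Ω)
    (s : ℕ → Set Ω) {C η : ℝ} (hη : 0 < η)
    (hs : ∀ᶠ n : ℕ in atTop, P (s n) ≤ ENNReal.ofReal (C * rexp (-(n * η)))) :
    ∀ᵐ ω ∂P, ∀ᶠ n : ℕ in atTop, ω ∉ s n := by
  obtain ⟨n₀, hn₀⟩ := eventually_atTop.1 hs
  have hsum : Summable fun n : ℕ => C * rexp (-(n * η)) := by
    refine Summable.mul_left _ ?_
    have := Real.summable_exp_nat_mul_of_ge (c := -η) (by linarith) (f := fun n => (n : ℝ))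
      (fun i => le_rfl)
    refine this.congr fun n => ?_
    ring_nf
  have h := ae_eventually_notMem (μ := P) (s := fun n => s (n + n₀)) <| by
    refine ne_top_of_le_ne_top ((summable_nat_add_iff n₀).2 hsum).tsum_ofReal_ne_top ?_
    exact ENNReal.tsum_le_tsum fun n => hn₀ _ (by omega)
  filter_upwards [h] with ω hω
  obtain ⟨m, hm⟩ := eventually_atTop.1 hω
  refine eventually_atTop.2 ⟨m + n₀, fun n hn => ?_⟩
  have := hm (n - n₀) (by omega)
  rwa [Nat.sub_add_cancel (by omega)] at this

/-- Markov's inequality and Borel–Cantelli: exponential bounds on expectations transfer to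
almost sure exponential bounds, up to an arbitrarily small loss in the rate. -/
lemma ae_eventually_le_exp_of_lintegral_le {Ω : Type*} [MeasurableSpace Ω] (P : Measure Ω)
    (f : ℕ → Ω → ℝ≥0∞) (hf : ∀ n, Measurable (f n)) {b b' : ℝ} (hb : b < b')
    (h : ∀ᶠ n : ℕ in atTop, ∫⁻ ω, f n ω ∂P ≤ ENNReal.ofReal (rexp (n * b))) :
    ∀ᵐ ω ∂P, ∀ᶠ n : ℕ in atTop, f n ω ≤ ENNReal.ofReal (rexp (n * b')) := by
  have key := ae_eventually_notMem_of_exp_bound P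
    (fun n => {ω | ENNReal.ofReal (rexp (n * b')) ≤ f n ω}) (C := 1) (sub_pos.2 hb) <| by
      filter_upwards [h] with n hn
      have h1 := mul_meas_ge_le_lintegral (μ := P) (hf n) (ENNReal.ofReal (rexp (n * b')))
      have h2 := h1.trans hn
      rw [mul_comm, ← ENNReal.le_div_iff_mul_le (by simp [Real.exp_pos]) (by simp)] at h2
      refine h2.trans_eq ?_
      rw [← ENNReal.ofReal_div_of_pos (Real.exp_pos _), ← Real.exp_sub, one_mul]
      ring_nf
  filter_upwards [key] with ω hω
  filter_upwards [hω] with n hn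
  exact (not_le.1 hn).le

/-- Second moment bound for the number of occurrences of nearly pairwise independent events. -/
lemma measure_sum_indicator_lt_le {Ω : Type*} [MeasurableSpace Ω] (P : Measure Ω)
    [IsProbabilityMeasure P] (A : ℕ → Set Ω) (hA : ∀ i, MeasurableSet (A i)) (J : ℕ) (hJ : 0 < J)
    {p a : ℝ} (hp0 : 0 < p) (ha : 0 ≤ a) (hp : ∀ i, P.real (A i) = p)
    (hpair : ∀ i j, i < j → P.real (A i ∩ A j) ≤ p ^ 2 + a) :
    P {ω | ∑ i ∈ Finset.range J, (A i).indicator (fun _ => (1 : ℝ)) ω < J * p / 2} ≤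
      ENNReal.ofReal (4 / (J * p) + 4 * a / p ^ 2) := by
  have hpair' : ∀ i j, P.real (A i ∩ A j) ≤ p ^ 2 + a + if i = j then p else 0 := by
    intro i j
    rcases lt_trichotomy i j with h | h | h
    · simpa [h.ne] using hpair i j h
    · subst h
      simp only [inter_self, hp, if_true]
      nlinarith
    · rw [inter_comm]
      simpa [h.ne'] using hpair j i h
  have hJ' : (0 : ℝ) < J := by exact_mod_cast hJ
  set N : Ω → ℝ := fun ω => ∑ i ∈ Finset.range J, (A i).indicator (fun _ => (1 : ℝ)) ω with hN
  have hint : ∀ s : Set Ω, MeasurableSet s → Integrable (s.indicator fun _ => (1 : ℝ)) P :=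
    fun s hs => (integrable_const _).indicator hs
  have hexp : ∀ ω, (N ω - J * p) ^ 2 =
      (∑ i ∈ Finset.range J, ∑ j ∈ Finset.range J,
        (A i ∩ A j).indicator (fun _ => (1 : ℝ)) ω) - 2 * (J * p) *
        (∑ i ∈ Finset.range J, (A i).indicator (fun _ => (1 : ℝ)) ω) + (J * p) ^ 2 := by
    intro ω
    have : ∑ i ∈ Finset.range J, ∑ j ∈ Finset.range J,
        (A i ∩ A j).indicator (fun _ => (1 : ℝ)) ω = N ω * N ω := by
      simp only [hN, Finset.sum_mul_sum]
      refine Finset.sum_congr rfl fun i _ => Finset.sum_congr rfl fun j _ => ?_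
      by_cases hi : ω ∈ A i <;> by_cases hj : ω ∈ A j <;> simp [hi, hj]
    rw [this]
    ring
  have hI1 : Integrable (fun ω => ∑ i ∈ Finset.range J, ∑ j ∈ Finset.range J,
        (A i ∩ A j).indicator (fun _ => (1 : ℝ)) ω) P :=
    integrable_finsetSum _ fun i _ => integrable_finsetSum _ fun j _ =>
      hint _ ((hA i).inter (hA j))
  have hI2 : Integrable (fun ω => ∑ i ∈ Finset.range J,
      (A i).indicator (fun _ => (1 : ℝ)) ω) P :=
    integrable_finsetSum _ fun i _ => hint _ (hA i)
  have hI12 : Integrable (fun ω => (∑ i ∈ Finset.range J, ∑ j ∈ Finset.range J,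
        (A i ∩ A j).indicator (fun _ => (1 : ℝ)) ω) - 2 * (J * p) *
        (∑ i ∈ Finset.range J, (A i).indicator (fun _ => (1 : ℝ)) ω)) P :=
    hI1.sub (hI2.const_mul _)
  have hI3 : Integrable (fun ω => (N ω - J * p) ^ 2) P := by
    simp only [hexp]
    exact hI12.add (integrable_const _)
  have hmoment : ∫ ω, (N ω - J * p) ^ 2 ∂P ≤ J * p + J ^ 2 * a := by
    simp only [hexp]
    rw [integral_add hI12 (integrable_const _),
      integral_sub hI1 (hI2.const_mul _), integral_const_mul,
      integral_finsetSum _ fun i _ => hint _ (hA i),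
      integral_finsetSum _ fun i _ => integrable_finsetSum _ fun j _ =>
        hint _ ((hA i).inter (hA j))]
    simp_rw [integral_finsetSum _ fun j _ => hint _ ((hA _).inter (hA j)),
      integral_indicator_const _ (hA _), integral_indicator_const _ ((hA _).inter (hA _)), hp]
    have h1 : ∑ i ∈ Finset.range J, ∑ j ∈ Finset.range J, P.real (A i ∩ A j) • (1 : ℝ) ≤
        ∑ i ∈ Finset.range J, ∑ j ∈ Finset.range J, (p ^ 2 + a + if i = j then p else 0) :=
      Finset.sum_le_sum fun i _ => Finset.sum_le_sum fun j _ => by simpa using hpair' i j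
    have h2 : ∑ i ∈ Finset.range J, ∑ j ∈ Finset.range J, (p ^ 2 + a + if i = j then p else 0)
        = J ^ 2 * (p ^ 2 + a) + J * p := by
      simp only [Finset.sum_add_distrib, Finset.sum_const, Finset.card_range, nsmul_eq_mul,
        Finset.sum_ite_eq, Finset.mem_range]
      have : ∑ i ∈ Finset.range J, (if i < J then p else 0) = J * p := by
        rw [Finset.sum_congr rfl fun i hi => if_pos (Finset.mem_range.1 hi)]
        simp
      rw [this]
      ring
    simp only [Finset.sum_const, Finset.card_range, integral_const, probReal_univ, smul_eq_mul,
      nsmul_eq_mul] at h1 h2 ⊢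
    nlinarith
  have hmarkov := mul_meas_ge_le_integral_of_nonneg (μ := P)
    (Eventually.of_forall fun ω => sq_nonneg (N ω - J * p)) hI3 ((J * p / 2) ^ 2)
  have hsub : {ω | N ω < J * p / 2} ⊆ {ω | (J * p / 2) ^ 2 ≤ (N ω - J * p) ^ 2} := by
    intro ω hω
    simp only [mem_ofPred_eq] at hω ⊢
    have : 0 < J * p := by positivity
    nlinarith
  rw [← ofReal_measureReal]
  refine ENNReal.ofReal_le_ofReal ((measureReal_mono hsub).trans ?_)
  have h4 : P.real {ω | (J * p / 2) ^ 2 ≤ (N ω - J * p) ^ 2} ≤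
      (J * p + J ^ 2 * a) / (J * p / 2) ^ 2 := by
    rw [le_div_iff₀ (by positivity), mul_comm]
    exact hmarkov.trans hmoment
  refine h4.trans_eq ?_
  field_simp
  norm_num

/-- Polynomial moments of the inverse of a nonincreasing sequence force polynomial decay. -/
lemma exists_le_rpow_of_lintegral_inverse {α : ℕ → ℝ} (h0 : α 0 = 1 / 2)
    (h1 : ∀ m, 1 ≤ m → α m ≤ 1) (hmono : ∀ m m', 1 ≤ m → m ≤ m' → α m' ≤ α m)
    {αinv : ℝ → ℝ≥0∞}
    (hαinv : ∀ u, αinv u = sInf ((fun m : ℕ => (m : ℝ≥0∞)) '' {m | α m ≤ u}))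
    {q : ℝ} (hq : 0 < q) (hfin : ∫⁻ u in Ioc (0 : ℝ) 1, (αinv u) ^ q ∂volume < ⊤) :
    ∃ C : ℝ, 0 ≤ C ∧ ∀ m : ℕ, 1 ≤ m → α m ≤ C * (m : ℝ) ^ (-q) := by
  refine ⟨2 * (∫⁻ u in Ioc (0 : ℝ) 1, (αinv u) ^ q ∂volume).toReal, by positivity,
    fun m hm => ?_⟩
  have hm0 : (0 : ℝ) < m := by exact_mod_cast hm
  rcases le_or_gt (α m) 0 with hneg | hpos
  · exact hneg.trans (by positivity)
  have hlow : ∀ u ∈ Ioo (0 : ℝ) (α m / 2), (m : ℝ≥0∞) ^ q ≤ (αinv u) ^ q := by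
    intro u hu
    refine ENNReal.rpow_le_rpow ?_ hq.le
    rw [hαinv]
    refine le_sInf ?_
    rintro _ ⟨m', hm', rfl⟩
    simp only [mem_ofPred_eq] at hm'
    simp only [Nat.cast_le]
    by_contra! hlt
    rcases Nat.eq_zero_or_pos m' with rfl | hpos'
    · linarith [h1 m hm, hu.2]
    · linarith [hmono m' m hpos' hlt.le, hu.2]
  have hle : ENNReal.ofReal (α m / 2) * (m : ℝ≥0∞) ^ q ≤
      ∫⁻ u in Ioc (0 : ℝ) 1, (αinv u) ^ q ∂volume := by
    calc ENNReal.ofReal (α m / 2) * (m : ℝ≥0∞) ^ q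
        = ∫⁻ _ in Ioo (0 : ℝ) (α m / 2), (m : ℝ≥0∞) ^ q ∂volume := by
          rw [setLIntegral_const, Real.volume_Ioo, sub_zero, mul_comm]
      _ ≤ ∫⁻ u in Ioo (0 : ℝ) (α m / 2), (αinv u) ^ q ∂volume :=
          setLIntegral_mono' measurableSet_Ioo hlow
      _ ≤ _ := lintegral_mono_set
          (Ioo_subset_Ioc_self.trans (Ioc_subset_Ioc_right (by linarith [h1 m hm])))
  have := ENNReal.toReal_mono hfin.ne hle
  rw [ENNReal.toReal_mul, ENNReal.toReal_ofReal (by linarith), ← ENNReal.toReal_rpow,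
    ENNReal.toReal_natCast] at this
  rw [Real.rpow_neg hm0.le, ← div_eq_mul_inv, le_div_iff₀ (by positivity)]
  linarith

/-- In a polynomially mixing array of events of probability at least `exp (-n (I₀ + η))`, almost
surely the proportion of the first `k n` events that occur is eventually at least
`exp (-n (I₀ + 3 η))`, as soon as `k n` is at least `exp (n (I₀ + 3 η))`. -/
lemma ae_eventually_exp_le_count {Ω : Type*} [MeasurableSpace Ω] (P : Measure Ω)
    [IsProbabilityMeasure P] (A : ℕ → ℕ → Set Ω) (hA : ∀ n j, MeasurableSet (A n j))
    {p : ℕ → ℝ} (hp : ∀ n j, P.real (A n j) = p n) {α : ℕ → ℝ}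
    (hα : ∀ q : ℝ, 0 < q → ∃ C : ℝ, 0 ≤ C ∧ ∀ m : ℕ, 1 ≤ m → α m ≤ C * (m : ℝ) ^ (-q))
    (hmix : ∀ n j j', 1 ≤ n → j + 3 ≤ j' →
      P.real (A n j ∩ A n j') ≤ p n ^ 2 + α ((j' - j - 2) * n))
    {k : ℕ → ℕ} {I₀ η : ℝ} (hI₀ : 0 ≤ I₀) (hη : 0 < η)
    (hk : ∀ᶠ n : ℕ in atTop, rexp (n * (I₀ + 3 * η)) ≤ k n)
    (hpn : ∀ᶠ n : ℕ in atTop, rexp (-(n * (I₀ + η))) ≤ p n) :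
    ∀ᵐ ω ∂P, ∀ᶠ n : ℕ in atTop, k n * rexp (-(n * (I₀ + 3 * η))) ≤
      ∑ j ∈ Finset.range (k n), (A n j).indicator (fun _ => (1 : ℝ)) ω := by
  set q : ℝ := (2 * (I₀ + η) + η) / η with hq
  have hq0 : 0 < q := by positivity
  obtain ⟨C, hC0, hC⟩ := hα q hq0
  set M : ℕ → ℕ := fun n => ⌈rexp (n * η)⌉₊ + 2 with hM
  have hMlow : ∀ n : ℕ, rexp (n * η) + 2 ≤ M n := fun n => by
    simp only [hM]; push_cast; linarith [Nat.le_ceil (rexp (n * η))]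
  have hMup : ∀ n, (M n : ℝ) ≤ rexp (n * η) + 3 := fun n => by
    simp only [hM]; push_cast; linarith [Nat.ceil_lt_add_one (Real.exp_pos (n * η)).le]
  have hM0 : ∀ n, 0 < M n := fun n => by simp [hM]
  have hlarge : ∀ᶠ n : ℕ in atTop, 6 ≤ rexp (n * η) :=
    (Real.tendsto_exp_atTop.comp
      (tendsto_natCast_atTop_atTop.atTop_mul_const hη)).eventually_ge_atTop 6
  have hJ : ∀ᶠ n : ℕ in atTop, (k n : ℝ) / (2 * M n) ≤ (k n / M n : ℕ) := by
    filter_upwards [hk, hlarge] with n hkn hl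
    have h3 : rexp (n * η) ^ 3 ≤ k n := by
      refine le_trans ?_ hkn
      rw [← Real.exp_nat_mul]
      refine Real.exp_le_exp.2 ?_
      have : (0 : ℝ) ≤ n * I₀ := by positivity
      push_cast
      nlinarith
    have h2M : (2 * M n : ℝ) ≤ k n := by
      have := hMup n
      nlinarith [mul_self_nonneg (rexp (n * η) - 6), sq_nonneg (rexp (n * η))]
    have hMpos : (0 : ℝ) < M n := by exact_mod_cast hM0 n
    have hdiv : (k n : ℝ) < M n * ((k n / M n : ℕ) + 1) := by
      exact_mod_cast Nat.lt_mul_div_succ (k n) (hM0 n)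
    rw [div_le_iff₀ (by positivity)]
    nlinarith
  have hBC := ae_eventually_notMem_of_exp_bound P
    (fun n => {ω | ∑ i ∈ Finset.range (k n / M n),
      (A n (i * M n)).indicator (fun _ => (1 : ℝ)) ω < (k n / M n : ℕ) * p n / 2})
    (C := 16 + 4 * C) hη <| by
    filter_upwards [hk, hlarge, hJ, hpn, eventually_ge_atTop 1] with n hkn hl hJn hpn hn
    have hMpos : (0 : ℝ) < M n := by exact_mod_cast hM0 n
    have hkpos : (0 : ℝ) < k n := (Real.exp_pos _).trans_le hkn
    have hJpos : (0 : ℝ) < (k n / M n : ℕ) := lt_of_lt_of_le (by positivity) hJn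
    have hppos : 0 < p n := (Real.exp_pos _).trans_le hpn
    refine (measure_sum_indicator_lt_le P (fun i => A n (i * M n)) (fun i => hA _ _) _
      (by exact_mod_cast hJpos) hppos (a := C * rexp (-(n * η * q))) (by positivity)
      (fun i => hp _ _) fun i j hij => ?_).trans (ENNReal.ofReal_le_ofReal ?_)
    · have hMge : 3 ≤ M n := by
        have := hMlow n
        have : (3 : ℝ) ≤ M n := by linarith
        exact_mod_cast this
      have hstep : i * M n + M n ≤ j * M n := by
        calc i * M n + M n = (i + 1) * M n := by ring
          _ ≤ j * M n := Nat.mul_le_mul_right _ hij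
      refine (hmix n _ _ hn (by omega)).trans ?_
      set g := j * M n - i * M n - 2 with hg
      have hgM : M n ≤ g + 2 := by omega
      have hg1 : 1 ≤ g := by omega
      have hgreal : rexp (n * η) ≤ ((g * n : ℕ) : ℝ) := by
        have h1 : (M n : ℝ) ≤ g + 2 := by exact_mod_cast hgM
        have h2 : (1 : ℝ) ≤ n := by exact_mod_cast hn
        have h3 : (0 : ℝ) ≤ g := by positivity
        push_cast
        nlinarith [hMlow n]
      have : ((g * n : ℕ) : ℝ) ^ (-q) ≤ rexp (-(n * η * q)) := by
        refine (Real.rpow_le_rpow_of_nonpos (Real.exp_pos _) hgreal (by linarith)).trans_eq ?_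
        rw [← Real.exp_mul]
        ring_nf
      have h5 := hC (g * n) (Nat.mul_pos hg1 hn)
      have := mul_le_mul_of_nonneg_left this hC0
      linarith
    · have h1 : rexp (n * η) / 4 ≤ (k n / M n : ℕ) * p n := by
        have h2 : rexp (n * η) ^ 2 ≤ k n * p n := by
          refine le_trans (le_of_eq ?_) (mul_le_mul hkn hpn (Real.exp_pos _).le hkpos.le)
          rw [← Real.exp_add, ← Real.exp_nat_mul]
          push_cast
          ring_nf
        have h3 : k n * p n / (2 * M n) ≤ (k n / M n : ℕ) * p n := by
          rw [mul_div_right_comm]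
          exact mul_le_mul_of_nonneg_right hJn hppos.le
        refine le_trans ?_ h3
        rw [le_div_iff₀ (by positivity)]
        nlinarith [hMup n]
      have h2 : 4 / ((k n / M n : ℕ) * p n) ≤ 16 * rexp (-(n * η)) := by
        rw [Real.exp_neg, ← div_eq_mul_inv, div_le_div_iff₀ (by positivity) (by positivity)]
        linarith
      have h3 : 4 * (C * rexp (-(n * η * q))) / p n ^ 2 ≤ 4 * C * rexp (-(n * η)) := by
        rw [div_le_iff₀ (by positivity)]
        have h4 : rexp (-(n * η * q)) = rexp (-(n * η)) * rexp (-(n * (I₀ + η))) ^ 2 := by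
          rw [← Real.exp_nat_mul, ← Real.exp_add, hq]
          congr 1
          field_simp
          push_cast
          ring
        have h5 : rexp (-(n * (I₀ + η))) ^ 2 ≤ p n ^ 2 := by gcongr
        rw [h4]
        calc 4 * (C * (rexp (-(n * η)) * rexp (-(n * (I₀ + η))) ^ 2))
            = 4 * C * rexp (-(n * η)) * rexp (-(n * (I₀ + η))) ^ 2 := by ring
          _ ≤ _ := mul_le_mul_of_nonneg_left h5 (by positivity)
      linarith
  filter_upwards [hBC] with ω hω
  filter_upwards [hω, hk, hlarge, hJ, hpn] with n hωn hkn hl hJn hpn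
  have hMpos : (0 : ℝ) < M n := by exact_mod_cast hM0 n
  have hkpos : (0 : ℝ) < k n := (Real.exp_pos _).trans_le hkn
  have hppos : 0 < p n := (Real.exp_pos _).trans_le hpn
  have hcount := not_lt.1 hωn
  have hsub : ∑ i ∈ Finset.range (k n / M n), (A n (i * M n)).indicator (fun _ => (1 : ℝ)) ω ≤
      ∑ j ∈ Finset.range (k n), (A n j).indicator (fun _ => (1 : ℝ)) ω := by
    rw [← Finset.sum_image (s := Finset.range (k n / M n)) (g := fun i => i * M n)
      (f := fun j => (A n j).indicator (fun _ => (1 : ℝ)) ω)]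
    · refine Finset.sum_le_sum_of_subset_of_nonneg ?_ fun j _ _ =>
        indicator_nonneg (fun _ _ => zero_le_one) _
      intro j hj
      obtain ⟨i, hi, rfl⟩ := Finset.mem_image.1 hj
      rw [Finset.mem_range] at hi ⊢
      calc i * M n < (i + 1) * M n := Nat.mul_lt_mul_of_pos_right (Nat.lt_succ_self i) (hM0 n)
        _ ≤ k n / M n * M n := Nat.mul_le_mul_right _ hi
        _ ≤ k n := Nat.div_mul_le_self _ _
    · intro i _ j _ hij
      exact Nat.eq_of_mul_eq_mul_right (hM0 n) hij
  refine le_trans ?_ (hcount.trans hsub)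
  have h1 : (k n : ℝ) / (2 * M n) * p n / 2 ≤ (k n / M n : ℕ) * p n / 2 := by gcongr
  refine le_trans ?_ h1
  have h2 : rexp (-(n * (I₀ + 3 * η))) * (4 * M n) ≤ p n := by
    have h3 : rexp (-(n * (I₀ + 3 * η))) * rexp (n * η) ^ 2 = rexp (-(n * (I₀ + η))) := by
      rw [← Real.exp_nat_mul, ← Real.exp_add]
      push_cast
      ring_nf
    refine le_trans ?_ (h3.le.trans hpn)
    refine mul_le_mul_of_nonneg_left ?_ (Real.exp_pos _).le
    nlinarith [hMup n]
  have h4 : (k n : ℝ) / (2 * M n) * p n / 2 = k n * (p n / (4 * M n)) := by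
    field_simp
    norm_num
  rw [h4]
  refine mul_le_mul_of_nonneg_left ?_ hkpos.le
  rwa [le_div_iff₀ (by positivity)]

lemma log_ofReal_exp (y : ℝ) : ENNReal.log (ENNReal.ofReal (rexp y)) = y := by
  rw [ENNReal.log_ofReal_of_pos (Real.exp_pos _), Real.log_exp]

lemma inv_mul_log_le_iff {n : ℕ} (hn : 1 ≤ n) (m : ℝ≥0∞) (b : ℝ) :
    ((n : ℝ) : EReal)⁻¹ * ENNReal.log m ≤ b ↔ m ≤ ENNReal.ofReal (rexp (n * b)) := by
  have hn0 : (0 : EReal) < ((n : ℝ) : EReal) := by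
    exact_mod_cast (Nat.lt_of_lt_of_le Nat.zero_lt_one hn)
  rw [← EReal.div_eq_inv_mul, EReal.div_le_iff_le_mul hn0 (EReal.coe_ne_top _),
    ← ENNReal.log_le_log_iff, log_ofReal_exp, EReal.coe_mul]

lemma le_inv_mul_log_iff {n : ℕ} (hn : 1 ≤ n) (m : ℝ≥0∞) (b : ℝ) :
    b ≤ ((n : ℝ) : EReal)⁻¹ * ENNReal.log m ↔ ENNReal.ofReal (rexp (n * b)) ≤ m := by
  have hn0 : (0 : EReal) < ((n : ℝ) : EReal) := by
    exact_mod_cast (Nat.lt_of_lt_of_le Nat.zero_lt_one hn)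
  rw [← EReal.div_eq_inv_mul, EReal.le_div_iff_mul_le hn0 (EReal.coe_ne_top _),
    ← ENNReal.log_le_log_iff, log_ofReal_exp, mul_comm, EReal.coe_mul]

/-- Two-sided exponential bounds at small radii identify the local exponential rate. -/
lemma tendsto_local_rate_of_exp_bounds {F : ℝ → ℕ → ℝ≥0∞}
    (hF : ∀ n ε ε', ε ≤ ε' → F ε n ≤ F ε' n) {I₀ : ℝ}
    (hup : ∀ c : ℝ, 0 < c → ∃ ε : ℝ, 0 < ε ∧
      ∀ᶠ n : ℕ in atTop, F ε n ≤ ENNReal.ofReal (rexp (n * (-I₀ + c))))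
    (hlow : ∀ c : ℝ, 0 < c → ∀ ε : ℝ, 0 < ε →
      ∀ᶠ n : ℕ in atTop, ENNReal.ofReal (rexp (n * (-I₀ - c))) ≤ F ε n) :
    Tendsto (fun ε : ℝ => atTop.liminf fun n : ℕ => ((n : ℝ) : EReal)⁻¹ * ENNReal.log (F ε n))
        (𝓝[>] 0) (𝓝 (-(I₀ : EReal))) ∧
      Tendsto (fun ε : ℝ => atTop.limsup fun n : ℕ => ((n : ℝ) : EReal)⁻¹ * ENNReal.log (F ε n))
        (𝓝[>] 0) (𝓝 (-(I₀ : EReal))) := by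
  have hle : ∀ ε : ℝ, (atTop.liminf fun n : ℕ => ((n : ℝ) : EReal)⁻¹ * ENNReal.log (F ε n)) ≤
      atTop.limsup fun n : ℕ => ((n : ℝ) : EReal)⁻¹ * ENNReal.log (F ε n) :=
    fun ε => liminf_le_limsup
  have hlow' : ∀ a : EReal, a < -(I₀ : EReal) → ∀ ε : ℝ, 0 < ε →
      a < atTop.liminf fun n : ℕ => ((n : ℝ) : EReal)⁻¹ * ENNReal.log (F ε n) := by
    intro a ha ε hε
    obtain ⟨r, har, hr⟩ := EReal.lt_iff_exists_real_btwn.1 ha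
    have hr' : r < -I₀ := by exact_mod_cast hr
    refine har.trans_le (le_liminf_of_le (by isBoundedDefault) ?_)
    filter_upwards [hlow (-I₀ - r) (by linarith) ε hε, eventually_ge_atTop 1] with n h1 hn
    rw [le_inv_mul_log_iff hn]
    rwa [show -I₀ - (-I₀ - r) = r by ring] at h1
  have hup' : ∀ b : EReal, -(I₀ : EReal) < b → ∀ᶠ ε : ℝ in 𝓝[>] 0,
      (atTop.limsup fun n : ℕ => ((n : ℝ) : EReal)⁻¹ * ENNReal.log (F ε n)) < b := by
    intro b hb
    obtain ⟨r, hr, hrb⟩ := EReal.lt_iff_exists_real_btwn.1 hb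
    have hr' : -I₀ < r := by exact_mod_cast hr
    obtain ⟨ε₀, hε₀, h⟩ := hup (r + I₀) (by linarith)
    filter_upwards [Ioc_mem_nhdsGT hε₀] with ε hε
    refine (limsup_le_of_le (by isBoundedDefault) ?_).trans_lt hrb
    filter_upwards [h, eventually_ge_atTop 1] with n h1 hn
    rw [inv_mul_log_le_iff hn]
    rw [show -I₀ + (r + I₀) = r by ring] at h1
    exact (hF n ε ε₀ hε.2).trans h1
  refine ⟨tendsto_order.2 ⟨fun a ha => ?_, fun b hb => ?_⟩,
    tendsto_order.2 ⟨fun a ha => ?_, fun b hb => ?_⟩⟩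
  · filter_upwards [self_mem_nhdsWithin] with ε hε using hlow' a ha ε hε
  · filter_upwards [hup' b hb] with ε hε using (hle ε).trans_lt hε
  · filter_upwards [self_mem_nhdsWithin] with ε hε using (hlow' a ha ε hε).trans_le (hle ε)
  · exact hup' b hb

/-- Basic properties of Rosenblatt coefficients: they bound covariances of past and future
events, are at most one and are nonincreasing. -/
lemma rosenblatt_properties {Ω : Type*} [MeasurableSpace Ω] (P : Measure Ω)
    [IsProbabilityMeasure P] (past future : ℕ → MeasurableSpace Ω)
    (hfuture : ∀ i j, i ≤ j → future j ≤ future i) (α : ℕ → ℝ)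
    (hα : ∀ m, 1 ≤ m → α m = ⨆ i : ℕ, sSup {r : ℝ | ∃ A B : Set Ω,
      MeasurableSet[past i] A ∧ MeasurableSet[future (i + m)] B ∧
      r = |(P A).toReal * (P B).toReal - (P (A ∩ B)).toReal|}) :
    (∀ m, 1 ≤ m → α m ≤ 1) ∧ (∀ m m', 1 ≤ m → m ≤ m' → α m' ≤ α m) ∧
      ∀ m i, 1 ≤ m → ∀ A B, MeasurableSet[past i] A → MeasurableSet[future (i + m)] B →
        P.real (A ∩ B) ≤ P.real A * P.real B + α m := by
  set S : ℕ → ℕ → Set ℝ := fun i m => {r : ℝ | ∃ A B : Set Ω,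
      MeasurableSet[past i] A ∧ MeasurableSet[future (i + m)] B ∧
      r = |(P A).toReal * (P B).toReal - (P (A ∩ B)).toReal|} with hS
  have hle : ∀ i m, ∀ r ∈ S i m, r ≤ 1 := by
    rintro i m r ⟨A, B, -, -, rfl⟩
    have h1 : ∀ s, 0 ≤ (P s).toReal ∧ (P s).toReal ≤ 1 := fun s =>
      ⟨measureReal_nonneg, measureReal_le_one⟩
    rw [abs_le]
    constructor <;>
      nlinarith [h1 A, h1 B, h1 (A ∩ B), mul_nonneg (h1 A).1 (h1 B).1,
        mul_le_one₀ (h1 A).2 (h1 B).1 (h1 B).2]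
  have hne : ∀ i m, (S i m).Nonempty := fun i m =>
    ⟨_, ∅, ∅, @MeasurableSet.empty _ (past i), @MeasurableSet.empty _ (future (i + m)), rfl⟩
  have hbdd : ∀ i m, BddAbove (S i m) := fun i m => ⟨1, hle i m⟩
  have hbdd' : ∀ m, BddAbove (range fun i => sSup (S i m)) := fun m =>
    ⟨1, by rintro _ ⟨i, rfl⟩; exact csSup_le (hne i m) (hle i m)⟩
  refine ⟨fun m hm => ?_, fun m m' hm hmm => ?_, fun m i hm A B hA hB => ?_⟩
  · rw [hα m hm]
    exact ciSup_le fun i => csSup_le (hne i m) (hle i m)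
  · rw [hα m hm, hα m' (hm.trans hmm)]
    refine ciSup_mono (hbdd' m) fun i => csSup_le_csSup (hbdd i m) (hne i m') ?_
    rintro r ⟨A, B, hA, hB, rfl⟩
    exact ⟨A, B, hA, hfuture _ _ (by omega) _ hB, rfl⟩
  · have h1 : |P.real A * P.real B - P.real (A ∩ B)| ≤ α m := by
      rw [hα m hm]
      exact (le_csSup (hbdd i m) ⟨A, B, hA, hB, rfl⟩).trans (le_ciSup (hbdd' m) i)
    linarith [(abs_le.1 h1).1]

/-- A stationary process has the same law as all its shifts. -/
lemma map_shift_eq_of_stationary {Ω E : Type*} [MeasurableSpace Ω] [MeasurableSpace E]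
    (P : Measure Ω) (X : Ω → ℕ → E) (hX : Measurable X)
    (hstat : P.map (fun ω i => X ω (i + 1)) = P.map X) (j : ℕ) :
    P.map (fun ω i => X ω (i + j)) = P.map X := by
  have hsh : ∀ j, Measurable fun (z : ℕ → E) (i : ℕ) => z (i + j) := fun j => by fun_prop
  induction j with
  | zero => rfl
  | succ j ih =>
    calc P.map (fun ω i => X ω (i + (j + 1)))
        = (P.map fun ω i => X ω (i + 1)).map (fun (z : ℕ → E) (i : ℕ) => z (i + j)) := by
          have h1 : Measurable fun ω i => X ω (i + 1) := (hsh 1).comp hX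
          rw [Measure.map_map (hsh j) h1]
          rfl
      _ = P.map (fun ω i => X ω (i + j)) := by
          rw [hstat, Measure.map_map (hsh j) hX]
          rfl
      _ = P.map X := ih

/-- **Theorem 3(1), first part.**
Under (A1) (LDP for the laws `μₙ` of `SₙΦ(X)/n` with rate function `I`),
(A2) (mixing) and (A3) (approximation), if `x ∈ D_I` and
`liminf (log k(n))/n > I(x)`, then almost surely
`lim_{ε→0⁺} liminf_n (1/n) log μₙ^ω(B(x,ε)) = lim_{ε→0⁺} limsup_n (1/n) log μₙ^ω(B(x,ε))
  = -I(x)`. -/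
theorem theorem3_part1_first
    {Ω : Type*} [MeasurableSpace Ω] (P : Measure Ω) [IsProbabilityMeasure P]
    {E : Type*} [MeasurableSpace E]
    {𝒴 : Type*} [NormedAddCommGroup 𝒴] [NormedSpace ℝ 𝒴]
    [MeasurableSpace 𝒴] [BorelSpace 𝒴]
    -- the stationary process
    (Xseq : Ω → ℕ → E) (hXmeas : Measurable Xseq)
    (hstat : Measure.map (fun ω => fun i => Xseq ω (i + 1)) P = Measure.map Xseq P)
    -- the functionals SₙΦ
    (SΦ : ℕ → (ℕ → E) → 𝒴) (hSΦmeas : ∀ n, Measurable (SΦ n))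
    -- the laws μₙ of SₙΦ(X)/n
    (μ : ℕ → Measure 𝒴)
    (hμ : ∀ n, μ n = Measure.map (fun ω => (n : ℝ)⁻¹ • SΦ n (Xseq ω)) P)
    -- (A1): LDP with rate function I
    (I : 𝒴 → ℝ≥0∞) (hIlsc : LowerSemicontinuous I)
    (hLDP : ∀ Γ : Set 𝒴,
      -(⨅ x ∈ interior Γ, (I x : EReal)) ≤
          Filter.atTop.liminf (fun n : ℕ => ((n : ℝ)⁻¹ : EReal) * ENNReal.log (μ n Γ)) ∧
        Filter.atTop.limsup (fun n : ℕ => ((n : ℝ)⁻¹ : EReal) * ENNReal.log (μ n Γ)) ≤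
          -(⨅ x ∈ closure Γ, (I x : EReal)))
    -- (A2): mixing
    (alphaX : ℕ → ℝ) (halpha0 : alphaX 0 = 1 / 2)
    (halpha : ∀ m, 1 ≤ m → alphaX m = ⨆ i : ℕ, sSup {r : ℝ | ∃ A B : Set Ω,
      MeasurableSet[⨆ kk ∈ Set.Iic i,
        MeasurableSpace.comap (fun ω => Xseq ω kk) inferInstance] A ∧
      MeasurableSet[⨆ jj ∈ Set.Ici (i + m),
        MeasurableSpace.comap (fun ω => Xseq ω jj) inferInstance] B ∧
      r = |(P A).toReal * (P B).toReal - (P (A ∩ B)).toReal|})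
    (αinv : ℝ → ℝ≥0∞)
    (hαinv : ∀ u, αinv u = sInf ((fun m : ℕ => (m : ℝ≥0∞)) '' {m | alphaX m ≤ u}))
    (hA2 : ∀ h : ℝ, 0 < h → ∫⁻ u in Set.Ioc (0 : ℝ) 1, (αinv u) ^ h ∂volume < ⊤)
    -- (A3): approximation by functions of 2n coordinates
    (SΦapp : ℕ → (ℕ → E) → 𝒴)
    (happdep : ∀ n (z z' : ℕ → E), (∀ i < 2 * n, z i = z' i) → SΦapp n z = SΦapp n z')
    (δ : ℕ → ℝ) (hδ0 : Tendsto δ atTop (nhds 0))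
    (hδ : ∀ n z, ‖SΦ n z - SΦapp n z‖ ≤ (n : ℝ) * δ n)
    -- the empirical measures μₙ^ω
    (k : ℕ → ℕ) (hkpos : ∀ n, 0 < k n)
    (μω : ℕ → Ω → Measure 𝒴)
    (hμω : ∀ n ω, μω n ω = (k n : ℝ≥0∞)⁻¹ •
      ∑ j ∈ Finset.Icc 1 (k n),
        Measure.dirac ((n : ℝ)⁻¹ • SΦ n (fun i => Xseq ω (i + (j - 1) * n))))
    -- the point x ∈ D_I and the growth condition on k(n)
    (x : 𝒴) (hx : I x ≠ ⊤)
    (hliminf : (I x : EReal) <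
      Filter.atTop.liminf (fun n => ((Real.log (k n) / n : ℝ) : EReal))) :
    ∀ᵐ ω ∂P,
      Tendsto (fun ε : ℝ =>
          Filter.atTop.liminf (fun n : ℕ =>
            ((n : ℝ)⁻¹ : EReal) * ENNReal.log (μω n ω (Metric.closedBall x ε))))
        (nhdsWithin 0 (Set.Ioi 0)) (nhds (-(I x : EReal))) ∧
      Tendsto (fun ε : ℝ =>
          Filter.atTop.limsup (fun n : ℕ =>
            ((n : ℝ)⁻¹ : EReal) * ENNReal.log (μω n ω (Metric.closedBall x ε))))
        (nhdsWithin 0 (Set.Ioi 0)) (nhds (-(I x : EReal))) := by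
  set B : ℝ → Set 𝒴 := fun ε => Metric.closedBall x ε with hB
  have hBmeas : ∀ ε, MeasurableSet (B ε) := fun ε => Metric.isClosed_closedBall.measurableSet
  set I₀ : ℝ := (I x).toReal with hI₀
  have hI₀0 : 0 ≤ I₀ := ENNReal.toReal_nonneg
  have hIx : (I x : EReal) = (I₀ : EReal) := (EReal.coe_ennreal_toReal hx).symm
  have hshift : ∀ j, Measurable fun ω i => Xseq ω (i + j) := fun j => by fun_prop
  have hlaw := map_shift_eq_of_stationary P Xseq hXmeas hstat
  have hμω' : ∀ n ω ε, μω n ω (B ε) = (k n : ℝ≥0∞)⁻¹ * ∑ j ∈ Finset.range (k n),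
      (B ε).indicator 1 ((n : ℝ)⁻¹ • SΦ n (fun i => Xseq ω (i + j * n))) := by
    intro n ω ε
    rw [hμω, Measure.smul_apply, Measure.finsetSum_apply, smul_eq_mul]
    congr 1
    rw [← Finset.Ico_succ_right_eq_Icc, Finset.sum_Ico_eq_sum_range]
    refine Finset.sum_congr (by simp) fun j _ => ?_
    rw [Measure.dirac_apply' _ (hBmeas ε), Nat.add_sub_cancel_left]
  have hSmeas : ∀ n : ℕ, Measurable fun z : ℕ → E => (n : ℝ)⁻¹ • SΦ n z := fun n =>
    (hSΦmeas n).const_smul _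
  have hprob : ∀ (n j : ℕ) ε, P ((fun ω => (n : ℝ)⁻¹ • SΦ n (fun i => Xseq ω (i + j))) ⁻¹' B ε) =
      μ n (B ε) := by
    intro n j ε
    have h0 : (fun ω => (n : ℝ)⁻¹ • SΦ n (Xseq ω)) = (fun z => (n : ℝ)⁻¹ • SΦ n z) ∘ Xseq := rfl
    rw [hμ, h0, ← Measure.map_map (hSmeas n) hXmeas, ← hlaw j,
      Measure.map_map (hSmeas n) (hshift j),
      Measure.map_apply ((hSmeas n).comp (hshift j)) (hBmeas ε)]
    rfl
  have hmeasω : ∀ n ε, Measurable fun ω => μω n ω (B ε) := by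
    intro n ε
    simp only [hμω']
    exact (Finset.measurable_sum _ fun j _ => (measurable_one.indicator (hBmeas ε)).comp
      ((hSmeas n).comp (hshift _))).const_mul _
  have hlint : ∀ n ε, ∫⁻ ω, μω n ω (B ε) ∂P = μ n (B ε) := by
    intro n ε
    simp only [hμω']
    have hm : ∀ j, Measurable fun ω => (B ε).indicator (1 : 𝒴 → ℝ≥0∞)
        ((n : ℝ)⁻¹ • SΦ n (fun i => Xseq ω (i + j * n))) := fun j =>
      (measurable_one.indicator (hBmeas ε)).comp ((hSmeas n).comp (hshift _))
    have hj : ∀ j, ∫⁻ ω, (B ε).indicator (1 : 𝒴 → ℝ≥0∞)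
        ((n : ℝ)⁻¹ • SΦ n (fun i => Xseq ω (i + j * n))) ∂P = μ n (B ε) := by
      intro j
      rw [← hprob n (j * n) ε]
      exact lintegral_indicator_one (((hSmeas n).comp (hshift (j * n))) (hBmeas ε))
    rw [lintegral_const_mul _ (Finset.measurable_sum _ fun j _ => hm j),
      lintegral_finsetSum _ fun j _ => hm j]
    simp only [hj, Finset.sum_const, Finset.card_range, nsmul_eq_mul]
    rw [← mul_assoc, ENNReal.inv_mul_cancel (by exact_mod_cast (hkpos n).ne')
      (ENNReal.natCast_ne_top _), one_mul]
  -- the upper bound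
  have hupper : ∀ c : ℝ, 0 < c → ∃ ε : ℝ, 0 < ε ∧ ∀ᵐ ω ∂P, ∀ᶠ n : ℕ in atTop,
      μω n ω (B ε) ≤ ENNReal.ofReal (rexp (n * (-I₀ + c))) := by
    intro c hc
    have hlsc := (continuous_coe_ennreal_ereal.comp_lowerSemicontinuous hIlsc
      EReal.coe_ennreal_strictMono.monotone) x ((I₀ - c / 3 : ℝ) : EReal) <| by
        simp only [Function.comp_apply, hIx, gt_iff_lt]
        exact_mod_cast (by linarith : I₀ - c / 3 < I₀)
    obtain ⟨ε, hε, hball⟩ := Metric.nhds_basis_closedBall.eventually_iff.1 hlsc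
    refine ⟨ε, hε, ?_⟩
    refine ae_eventually_le_exp_of_lintegral_le P (fun n ω => μω n ω (B ε))
      (fun n => hmeasω n ε) (b := -I₀ + c / 2) (by linarith) ?_
    have hinf : ((I₀ - c / 3 : ℝ) : EReal) ≤ ⨅ y ∈ closure (B ε), (I y : EReal) := by
      rw [Metric.isClosed_closedBall.closure_eq]
      exact le_iInf₂ fun y hy => (hball hy).le
    have hlim : atTop.limsup (fun n : ℕ => ((n : ℝ) : EReal)⁻¹ * ENNReal.log (μ n (B ε))) <
        ((-I₀ + c / 2 : ℝ) : EReal) := by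
      refine ((hLDP (B ε)).2.trans (EReal.neg_le_neg_iff.2 hinf)).trans_lt ?_
      exact_mod_cast (by linarith : -(I₀ - c / 3) < -I₀ + c / 2)
    filter_upwards [eventually_lt_of_limsup_lt hlim, eventually_ge_atTop 1] with n h1 hn
    rw [hlint]
    exact (inv_mul_log_le_iff hn _ _).1 h1.le
  -- mixing
  obtain ⟨hα1, hαmono, hαcov⟩ := rosenblatt_properties P
    (fun i => ⨆ kk ∈ Set.Iic i, MeasurableSpace.comap (fun ω => Xseq ω kk) inferInstance)
    (fun i => ⨆ jj ∈ Set.Ici i, MeasurableSpace.comap (fun ω => Xseq ω jj) inferInstance)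
    (fun i j hij => biSup_mono fun _ h => Set.mem_Ici.2 (hij.trans (Set.mem_Ici.1 h)))
    alphaX halpha
  have hαdecay : ∀ q : ℝ, 0 < q → ∃ C : ℝ, 0 ≤ C ∧ ∀ m : ℕ, 1 ≤ m →
      alphaX m ≤ C * (m : ℝ) ^ (-q) := fun q hq =>
    exists_le_rpow_of_lintegral_inverse halpha0 hα1 hαmono hαinv hq (hA2 q hq)
  -- truncation to the first `2 n` coordinates
  obtain ⟨ω₀⟩ : Nonempty Ω := nonempty_of_isProbabilityMeasure P
  set tr : ℕ → (ℕ → E) → ℕ → E := fun n z i => if i < 2 * n then z i else Xseq ω₀ 0 with htr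
  have htrS : ∀ (n : ℕ) z, 1 ≤ n →
      dist ((n : ℝ)⁻¹ • SΦ n z) ((n : ℝ)⁻¹ • SΦ n (tr n z)) ≤ 2 * δ n := by
    intro n z hn
    have hn0 : (0 : ℝ) < n := by exact_mod_cast hn
    have happ : SΦapp n (tr n z) = SΦapp n z := happdep n _ _ fun i hi => by simp [htr, hi]
    have h1 := hδ n z
    have h2 := hδ n (tr n z)
    rw [happ, norm_sub_rev] at h2
    have h3 : ‖SΦ n z - SΦ n (tr n z)‖ ≤ 2 * (n * δ n) := by
      have := norm_sub_le_norm_sub_add_norm_sub (SΦ n z) (SΦapp n z) (SΦ n (tr n z))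
      linarith
    rw [dist_eq_norm, ← smul_sub, norm_smul, norm_inv, Real.norm_natCast,
      inv_mul_le_iff₀ hn0]
    linarith
  have hlower : ∀ η : ℝ, 0 < η → ((I₀ + 3 * η : ℝ) : EReal) <
      atTop.liminf (fun n => ((Real.log (k n) / n : ℝ) : EReal)) → ∀ ε : ℝ, 0 < ε →
      ∀ᵐ ω ∂P, ∀ᶠ n : ℕ in atTop,
        ENNReal.ofReal (rexp (n * (-I₀ - 3 * η))) ≤ μω n ω (B ε) := by
    intro η hη hηk ε hε
    set Y : ℕ → ℕ → Ω → 𝒴 := fun n j ω =>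
      (n : ℝ)⁻¹ • SΦ n (tr n (fun i => Xseq ω (i + j * n))) with hY
    have hYmeas : ∀ n j (m : MeasurableSpace Ω),
        (∀ i < 2 * n, Measurable[m] fun ω => Xseq ω (i + j * n)) → Measurable[m] (Y n j) := by
      intro n j m hm
      refine (hSmeas n).comp ?_
      refine measurable_pi_iff.2 fun i => ?_
      by_cases hi : i < 2 * n
      · simpa [htr, hi] using hm i hi
      · simp [htr, hi]
    have hcoord : ∀ i, Measurable fun ω => Xseq ω i := fun i => by fun_prop
    set A : ℕ → ℕ → Set Ω := fun n j => Y n j ⁻¹' B (2 * ε / 3) with hA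
    have hAmeas : ∀ n j, MeasurableSet (A n j) := fun n j =>
      hYmeas n j _ (fun i _ => hcoord _) (hBmeas _)
    have htrmeas : ∀ n, Measurable (tr n) := fun n => by
      refine measurable_pi_iff.2 fun i => ?_
      by_cases hi : i < 2 * n
      · simpa [htr, hi] using measurable_pi_apply i
      · simp [htr, hi]
    have hAprob : ∀ n j, P.real (A n j) = P.real (A n 0) := by
      have h : ∀ n j, P (A n j) =
          P.map Xseq ((fun z => (n : ℝ)⁻¹ • SΦ n (tr n z)) ⁻¹' B (2 * ε / 3)) := by
        intro n j
        have hg : Measurable fun z => (n : ℝ)⁻¹ • SΦ n (tr n z) := (hSmeas n).comp (htrmeas n)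
        rw [← hlaw (j * n), Measure.map_apply (hshift _) (hg (hBmeas _))]
        rfl
      intro n j
      rw [measureReal_def, measureReal_def, h n j, h n 0]
    have hmix : ∀ n j j', 1 ≤ n → j + 3 ≤ j' →
        P.real (A n j ∩ A n j') ≤ P.real (A n 0) ^ 2 + alphaX ((j' - j - 2) * n) := by
      intro n j j' hn hjj
      have hpos : 1 ≤ (j' - j - 2) * n := Nat.mul_pos (by omega) hn
      have hidx : j * n + 2 * n + (j' - j - 2) * n = j' * n := by
        rw [← Nat.add_mul, ← Nat.add_mul]
        congr 1
        omega
      have := hαcov ((j' - j - 2) * n) (j * n + 2 * n) hpos (A n j) (A n j')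
        (hYmeas n j _ (fun i hi => (comap_measurable _).mono
          (le_iSup₂_of_le (i + j * n) (Set.mem_Iic.2 (by omega)) le_rfl) le_rfl) (hBmeas _))
        (hYmeas n j' _ (fun i hi => (comap_measurable _).mono
          (le_iSup₂_of_le (i + j' * n) (Set.mem_Ici.2 (by omega)) le_rfl) le_rfl) (hBmeas _))
      rwa [hAprob n j, hAprob n j', ← sq] at this
    have hk : ∀ᶠ n : ℕ in atTop, rexp (n * (I₀ + 3 * η)) ≤ k n := by
      filter_upwards [eventually_lt_of_lt_liminf hηk, eventually_ge_atTop 1] with n h1 hn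
      have hn0 : (0 : ℝ) < n := by exact_mod_cast hn
      have h2 : I₀ + 3 * η < Real.log (k n) / n := by exact_mod_cast h1
      rw [lt_div_iff₀ hn0, mul_comm] at h2
      exact (Real.le_log_iff_exp_le (by exact_mod_cast hkpos n)).1 h2.le
    have hδε : ∀ᶠ n in atTop, 2 * δ n < ε / 3 := by
      filter_upwards [hδ0.eventually_lt_const (by positivity : (0 : ℝ) < ε / 6)] with n hn
      linarith
    have hpn : ∀ᶠ n : ℕ in atTop, rexp (-(n * (I₀ + η))) ≤ P.real (A n 0) := by
      have hlim : ((-(I₀ + η) : ℝ) : EReal) <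
          atTop.liminf (fun n : ℕ => ((n : ℝ) : EReal)⁻¹ * ENNReal.log (μ n (B (ε / 3)))) := by
        refine lt_of_lt_of_le ?_ (hLDP (B (ε / 3))).1
        have hmem : x ∈ interior (B (ε / 3)) :=
          mem_interior_iff_mem_nhds.2 (Metric.closedBall_mem_nhds x (by positivity))
        refine lt_of_lt_of_le ?_ (EReal.neg_le_neg_iff.2 (iInf₂_le x hmem))
        rw [hIx]
        exact_mod_cast (by linarith : -(I₀ + η) < -I₀)
      filter_upwards [eventually_lt_of_lt_liminf hlim, eventually_ge_atTop 1, hδε] with n h1 hn hd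
      have h2 := (le_inv_mul_log_iff hn _ _).1 h1.le
      rw [← hprob n (0 * n)] at h2
      have h3 : P ((fun ω => (n : ℝ)⁻¹ • SΦ n (fun i => Xseq ω (i + 0 * n))) ⁻¹' B (ε / 3)) ≤
          P (A n 0) := by
        refine measure_mono fun ω hω => ?_
        have h4 := htrS n (fun i => Xseq ω (i + 0 * n)) hn
        have h5 : dist ((n : ℝ)⁻¹ • SΦ n (fun i => Xseq ω (i + 0 * n))) x ≤ ε / 3 := hω
        refine Metric.mem_closedBall.2 ((dist_triangle_left _ _
          ((n : ℝ)⁻¹ • SΦ n (fun i => Xseq ω (i + 0 * n)))).trans ?_)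
        linarith
      have h6 := ENNReal.toReal_mono (measure_ne_top _ _) (h2.trans h3)
      rw [ENNReal.toReal_ofReal (Real.exp_pos _).le] at h6
      rwa [mul_neg] at h6
    filter_upwards [ae_eventually_exp_le_count P A hAmeas hAprob hαdecay hmix hI₀0 hη hk hpn]
      with ω hω
    filter_upwards [hω, eventually_ge_atTop 1, hδε] with n h1 hn hd
    have hkn : (0 : ℝ) < k n := by exact_mod_cast hkpos n
    have hkE : (k n : ℝ≥0∞) ≠ 0 := by exact_mod_cast (hkpos n).ne'
    rw [hμω', ← ENNReal.div_eq_inv_mul, ENNReal.le_div_iff_mul_le (Or.inl hkE)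
      (Or.inl (ENNReal.natCast_ne_top _)), ← ENNReal.ofReal_natCast,
      ← ENNReal.ofReal_mul (Real.exp_pos _).le]
    have h2 : rexp (n * (-I₀ - 3 * η)) * k n = k n * rexp (-(n * (I₀ + 3 * η))) := by
      rw [mul_comm]
      ring_nf
    rw [h2]
    refine (ENNReal.ofReal_le_ofReal h1).trans ?_
    rw [ENNReal.ofReal_sum_of_nonneg fun j _ => indicator_nonneg (fun _ _ => zero_le_one) _]
    refine Finset.sum_le_sum fun j _ => ?_
    by_cases hj : ω ∈ A n j
    · have hmem : (n : ℝ)⁻¹ • SΦ n (fun i => Xseq ω (i + j * n)) ∈ B ε := by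
        have h4 := htrS n (fun i => Xseq ω (i + j * n)) hn
        have h5 : dist (Y n j ω) x ≤ 2 * ε / 3 := hj
        refine Metric.mem_closedBall.2 ((dist_triangle _ (Y n j ω) _).trans ?_)
        linarith
      simp [hj, hmem]
    · simp [hj]
  -- uniformization over countably many parameters
  obtain ⟨r, hr, hrk⟩ := EReal.lt_iff_exists_real_btwn.1 hliminf
  have hr' : I₀ < r := by
    rw [hIx] at hr
    exact_mod_cast hr
  have hcpos : ∀ l : ℕ, (0 : ℝ) < 1 / ((l : ℝ) + 1) := fun l => Nat.one_div_pos_of_nat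
  choose e he hup using fun l : ℕ => hupper (1 / ((l : ℝ) + 1)) (hcpos l)
  have hlow : ∀ l l' : ℕ, ∀ᵐ ω ∂P, ∀ᶠ n : ℕ in atTop,
      ENNReal.ofReal (rexp (n * (-I₀ - 1 / ((l : ℝ) + 1)))) ≤
        μω n ω (B (1 / ((l' : ℝ) + 1))) := by
    intro l l'
    set η := min (1 / ((l : ℝ) + 1) / 3) ((r - I₀) / 3) with hη
    have hη0 : 0 < η := lt_min (by positivity) (by linarith)
    have hη1 : η ≤ 1 / ((l : ℝ) + 1) / 3 := min_le_left _ _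
    have hη2 : η ≤ (r - I₀) / 3 := min_le_right _ _
    have hηk : ((I₀ + 3 * η : ℝ) : EReal) ≤ (r : EReal) := by
      exact_mod_cast (by linarith : I₀ + 3 * η ≤ r)
    filter_upwards [hlower η hη0 (hηk.trans_lt hrk) _ (hcpos l')] with ω hω
    filter_upwards [hω] with n hn
    refine le_trans (ENNReal.ofReal_le_ofReal (Real.exp_le_exp.2 ?_)) hn
    exact mul_le_mul_of_nonneg_left (by linarith) (Nat.cast_nonneg n)
  filter_upwards [ae_all_iff.2 hup, ae_all_iff.2 fun l => ae_all_iff.2 (hlow l)] with ω hu hl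
  rw [hIx]
  have hmono : ∀ n ε ε', ε ≤ ε' → μω n ω (B ε) ≤ μω n ω (B ε') := fun n ε ε' h =>
    measure_mono (Metric.closedBall_subset_closedBall h)
  refine tendsto_local_rate_of_exp_bounds (F := fun ε n => μω n ω (B ε)) hmono
    (fun c hc => ?_) fun c hc ε hε => ?_
  · obtain ⟨l, hlc⟩ := exists_nat_one_div_lt hc
    refine ⟨e l, he l, ?_⟩
    filter_upwards [hu l] with n hn
    refine hn.trans (ENNReal.ofReal_le_ofReal (Real.exp_le_exp.2 ?_))
    exact mul_le_mul_of_nonneg_left (by linarith) (Nat.cast_nonneg n)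
  · obtain ⟨l, hlc⟩ := exists_nat_one_div_lt hc
    obtain ⟨l', hlε⟩ := exists_nat_one_div_lt hε
    filter_upwards [hl l l'] with n hn
    refine le_trans (ENNReal.ofReal_le_ofReal (Real.exp_le_exp.2 ?_))
      (hn.trans (hmono n _ _ hlε.le))
    exact mul_le_mul_of_nonneg_left (by linarith) (Nat.cast_nonneg n)
end

section
/- Assume that (𝒴,‖·‖) is separable and that (A1), (A2) and (A3) hold. Suppose either that sup_{x∈D_I} I(x) < ∞ and liminf_{n→∞} (log k(n))/n > sup_{x∈D_I} I(x), or that lim_{n→∞} (log k(n))/n = ∞. Then with probability 1, (μ_n^ω)_{n≥1} satisfies in 𝒴 the weak LDP with rate function I (the LDP upper bound holding for compact sets). If moreover (μ_n)_{n≥1} is exponentially tight, then with probability 1, (μ_n^ω)_{n≥1} satisfies in 𝒴 the full LDP with good rate function I. (Theorem 4.) -/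
open MeasureTheory ProbabilityTheory Filter Set Real
open scoped ENNReal NNReal Classical Topology

section DeterministicLDP

open ExpGrowth

lemma ereal_inv_mul_log_eq_div (n : ℕ) (x : ℝ≥0∞) :
    ((n : ℝ)⁻¹ : EReal) * ENNReal.log x = ENNReal.log x / n := by
  rw [mul_comm, EReal.div_eq_inv_mul, mul_comm]
  rfl

lemma expGrowthSup_measure_mono {Z : Type*} [MeasurableSpace Z] (ν : ℕ → Measure Z) {s t : Set Z} (h : s ⊆ t) :
    expGrowthSup (fun n => ν n s) ≤ expGrowthSup (fun n => ν n t) :=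
  expGrowthSup_monotone fun _ => measure_mono h

lemma expGrowthSup_measure_union_le {Z : Type*} [MeasurableSpace Z] (ν : ℕ → Measure Z) (s t : Set Z) :
    expGrowthSup (fun n => ν n (s ∪ t)) ≤
      expGrowthSup (fun n => ν n s) ⊔ expGrowthSup (fun n => ν n t) := by
  rw [← expGrowthSup_add]
  exact expGrowthSup_monotone fun _ => measure_union_le s t

lemma expGrowthSup_le_of_exponentially_tight {Y : Type*} [MetricSpace Y]
    [MeasurableSpace Y] {ν : ℕ → Measure Y} {I : Y → ℝ≥0∞}
    (hc : ∀ K : Set Y, IsCompact K →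
      expGrowthSup (fun n => ν n K) ≤ -(⨅ x ∈ K, (I x : EReal)))
    (ht : ∀ α : ℝ, ∃ K : Set Y, IsCompact K ∧
      expGrowthSup (fun n => ν n Kᶜ) ≤ ((-α : ℝ) : EReal)) (Γ : Set Y) :
    expGrowthSup (fun n => ν n Γ) ≤ -(⨅ x ∈ closure Γ, (I x : EReal)) := by
  refine EReal.le_neg_of_le_neg (le_of_forall_lt fun a ha => ?_)
  obtain ⟨α, haα, hα⟩ := EReal.lt_iff_exists_real_btwn.1 ha
  refine haα.trans_le (EReal.le_neg_of_le_neg ?_)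
  obtain ⟨K, hK, hKα⟩ := ht α
  have hsub : Γ ⊆ (closure Γ ∩ K) ∪ Kᶜ := fun x hx => by
    by_cases h : x ∈ K
    · exact Or.inl ⟨subset_closure hx, h⟩
    · exact Or.inr h
  refine (expGrowthSup_measure_mono ν hsub).trans
    ((expGrowthSup_measure_union_le ν _ _).trans (sup_le ?_ ?_))
  · refine (hc _ (hK.inter_left isClosed_closure)).trans (EReal.neg_le_neg_iff.2 ?_)
    exact hα.le.trans (le_iInf₂ fun x hx => iInf₂_le x hx.1)
  · simpa using hKα

lemma isCompact_sublevel_of_exponentially_tight {Y : Type*} [MetricSpace Y]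
    [MeasurableSpace Y] {μ : ℕ → Measure Y} {I : Y → ℝ≥0∞}
    (hI : LowerSemicontinuous I)
    (hμ : ∀ Γ : Set Y, -(⨅ x ∈ interior Γ, (I x : EReal)) ≤ expGrowthInf (fun n => μ n Γ))
    (ht : ∀ α : ℝ, ∃ K : Set Y, IsCompact K ∧
      expGrowthSup (fun n => μ n Kᶜ) ≤ ((-α : ℝ) : EReal)) (c : ℝ≥0) :
    IsCompact {x : Y | I x ≤ c} := by
  obtain ⟨K, hK, hKα⟩ := ht (c + 1)
  refine hK.of_isClosed_subset (hI.isClosed_preimage _) fun x hx => ?_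
  by_contra hxK
  have h1 := (hμ Kᶜ).trans (expGrowthInf_le_expGrowthSup.trans hKα)
  rw [hK.isClosed.isOpen_compl.interior_eq, EReal.coe_neg, EReal.neg_le_neg_iff] at h1
  have h2 := h1.trans (iInf₂_le x hxK)
  have h3 : (I x : EReal) ≤ ((c : ℝ) : EReal) := by
    have : (I x : EReal) ≤ ((c : ℝ≥0∞) : EReal) := EReal.coe_ennreal_le_coe_ennreal_iff.2 hx
    rwa [← EReal.coe_nnreal_eq_coe_real]
  have h4 := EReal.coe_le_coe_iff.1 (h2.trans h3)
  linarith

variable {Y : Type*} [MetricSpace Y] [TopologicalSpace.SeparableSpace Y] [Nonempty Y]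

/-- A ball of the countable base, with its radius multiplied by `c`. -/
noncomputable def baseBall (Y : Type*) [MetricSpace Y] [TopologicalSpace.SeparableSpace Y]
    [Nonempty Y] (c : ℝ) (p : ℕ × ℕ) : Set Y :=
  Metric.ball (TopologicalSpace.denseSeq Y p.1) (c * (1 / ((p.2 : ℝ) + 1)))

lemma exists_baseBall_subset {x : Y} {U : Set Y} (hU : U ∈ 𝓝 x) :
    ∃ p : ℕ × ℕ, x ∈ baseBall Y 1 p ∧ closure (baseBall Y 3 p) ⊆ U := by
  obtain ⟨ε, hε, hεU⟩ := Metric.mem_nhds_iff.1 hU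
  obtain ⟨m, hm⟩ := exists_nat_one_div_lt (show (0 : ℝ) < ε / 4 by positivity)
  have hr : (0 : ℝ) < 1 / ((m : ℝ) + 1) := by positivity
  obtain ⟨i, hi⟩ :=
    (TopologicalSpace.denseRange_denseSeq Y).exists_dist_lt x hr
  refine ⟨(i, m), ?_, ?_⟩
  · simpa [baseBall, Metric.mem_ball] using hi
  · refine (Metric.closure_ball_subset_closedBall).trans fun y hy => hεU ?_
    rw [Metric.mem_closedBall] at hy
    rw [Metric.mem_ball]
    have := dist_triangle_right y x (TopologicalSpace.denseSeq Y i)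
    simp only at hy
    linarith

lemma baseBall_mono {c d : ℝ} (h : c ≤ d) (p : ℕ × ℕ) : baseBall Y c p ⊆ baseBall Y d p :=
  Metric.ball_subset_ball (by gcongr)

lemma isOpen_baseBall (c : ℝ) (p : ℕ × ℕ) : IsOpen (baseBall Y c p) := Metric.isOpen_ball

variable [MeasurableSpace Y]

lemma expGrowthSup_compact_le {μ ν : ℕ → Measure Y} {I : Y → ℝ≥0∞}
    (hI : LowerSemicontinuous I)
    (hμ : ∀ Γ : Set Y, expGrowthSup (fun n => μ n Γ) ≤ -(⨅ x ∈ closure Γ, (I x : EReal)))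
    (hν : ∀ p, expGrowthSup (fun n => ν n (baseBall Y 1 p)) ≤
      expGrowthSup (fun n => μ n (baseBall Y 1 p)))
    {K : Set Y} (hK : IsCompact K) :
    expGrowthSup (fun n => ν n K) ≤ -(⨅ x ∈ K, (I x : EReal)) := by
  refine EReal.le_neg_of_le_neg (le_of_forall_lt fun a ha => ?_)
  obtain ⟨a', haa', ha'⟩ := exists_between ha
  refine haa'.trans_le (EReal.le_neg_of_le_neg ?_)
  have hIE : LowerSemicontinuous fun x => (I x : EReal) :=
    continuous_coe_ennreal_ereal.comp_lowerSemicontinuous hI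
      fun _ _ h => EReal.coe_ennreal_le_coe_ennreal_iff.2 h
  refine hK.induction_on (p := fun s => expGrowthSup (fun n => ν n s) ≤ -a') ?_ ?_ ?_ ?_
  · have : (fun n => ν n (∅ : Set Y)) = 0 := by ext; simp
    rw [this, expGrowthSup_zero]; exact bot_le
  · exact fun s t hst ht => (expGrowthSup_measure_mono ν hst).trans ht
  · exact fun s t hs ht => (expGrowthSup_measure_union_le ν s t).trans (sup_le hs ht)
  · intro x hx
    have hxa : a' < (I x : EReal) := ha'.trans_le (iInf₂_le x hx)
    obtain ⟨p, hxp, hp⟩ := exists_baseBall_subset (hIE x a' hxa)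
    refine ⟨baseBall Y 1 p,
      mem_nhdsWithin_of_mem_nhds ((isOpen_baseBall 1 p).mem_nhds hxp), ?_⟩
    refine (hν p).trans ((hμ _).trans (EReal.neg_le_neg_iff.2 (le_iInf₂ fun y hy => ?_)))
    exact (hp (closure_mono (baseBall_mono (by norm_num) p) hy)).le

lemma le_expGrowthInf_of_baseBall {μ ν : ℕ → Measure Y} {I : Y → ℝ≥0∞} {L : EReal}
    (hL : ∀ x, I x ≠ ⊤ → (I x : EReal) < L)
    (hμ : ∀ Γ : Set Y, -(⨅ x ∈ interior Γ, (I x : EReal)) ≤ expGrowthInf (fun n => μ n Γ))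
    (hν : ∀ p, ∀ a : ℚ, 0 ≤ a → ((a : ℝ) : EReal) < L →
      ((-a : ℝ) : EReal) < expGrowthInf (fun n => μ n (baseBall Y 1 p)) →
      ((-a : ℝ) : EReal) ≤ expGrowthInf (fun n => ν n (baseBall Y 3 p))) (Γ : Set Y) :
    -(⨅ x ∈ interior Γ, (I x : EReal)) ≤ expGrowthInf (fun n => ν n Γ) := by
  refine EReal.neg_le_of_neg_le (le_iInf₂ fun x hx => ?_)
  by_cases hIx : I x = ⊤
  · simp [hIx]
  refine le_of_forall_gt fun b hb => ?_
  obtain ⟨a, ha, hab⟩ := EReal.lt_iff_exists_rat_btwn.1 (lt_min hb (hL x hIx))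
  obtain ⟨hab, haL⟩ := lt_min_iff.1 hab
  have ha0 : (0 : ℝ) < (a : ℝ) :=
    EReal.coe_lt_coe_iff.1 ((EReal.coe_ennreal_nonneg (I x)).trans_lt ha)
  obtain ⟨p, hxp, hp⟩ := exists_baseBall_subset (isOpen_interior.mem_nhds hx)
  have h1 : ((-a : ℝ) : EReal) < expGrowthInf (fun n => μ n (baseBall Y 1 p)) := by
    refine lt_of_lt_of_le ?_ (hμ _)
    rw [(isOpen_baseBall 1 p).interior_eq, EReal.coe_neg, EReal.neg_lt_neg_iff]
    exact (iInf₂_le x hxp).trans_lt ha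
  have h2 := hν p a (by exact_mod_cast ha0.le) haL h1
  have h3 : expGrowthInf (fun n => ν n (baseBall Y 3 p)) ≤ expGrowthInf (fun n => ν n Γ) :=
    expGrowthInf_monotone fun n =>
      measure_mono (subset_closure.trans (hp.trans interior_subset))
  have h4 := h2.trans h3
  rw [EReal.coe_neg] at h4
  exact (EReal.neg_le_of_neg_le h4).trans_lt hab

end DeterministicLDP

section BorelCantelli

open ExpGrowth

variable {Ω : Type*} [MeasurableSpace Ω] {P : Measure Ω} [IsProbabilityMeasure P]

lemma ereal_exp_coe_mul_natCast (b : ℝ) (n : ℕ) :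
    EReal.exp ((b : EReal) * n) = ENNReal.ofReal (Real.exp (b * n)) := by
  have : ((b : EReal) * n) = ((b * n : ℝ) : EReal) := by
    rw [EReal.coe_mul]; rfl
  rw [this, EReal.exp_coe]

lemma ae_eventually_notMem_of_exp_bound_s8 {s : ℕ → Set Ω} {C ε : ℝ} (hε : 0 < ε)
    (h : ∀ᶠ n : ℕ in atTop, P.real (s n) ≤ C * Real.exp (-ε * n)) :
    ∀ᵐ ω ∂P, ∀ᶠ n in atTop, ω ∉ s n := by
  apply ae_eventually_notMem
  have h1 : Summable fun n : ℕ => C * Real.exp (-ε * n) := by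
    refine Summable.mul_left _ ?_
    simpa [mul_comm] using Real.summable_exp_nat_mul_iff.2 (neg_lt_zero.2 hε)
  have h2 : Summable fun n => P.real (s n) :=
    Summable.of_norm_bounded_eventually_nat h1 (by
      filter_upwards [h] with n hn
      rwa [Real.norm_of_nonneg measureReal_nonneg])
  have h3 := h2.tsum_ofReal_ne_top
  simpa using h3

lemma ae_expGrowthSup_le {f : ℕ → Ω → ℝ≥0∞} (hf : ∀ n, Measurable (f n)) :
    ∀ᵐ ω ∂P, expGrowthSup (fun n => f n ω) ≤ expGrowthSup (fun n => ∫⁻ ω, f n ω ∂P) := by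
  set L := expGrowthSup (fun n => ∫⁻ ω, f n ω ∂P)
  have key : ∀ᵐ ω ∂P, ∀ b : ℚ, L < ((b : ℝ) : EReal) →
      expGrowthSup (fun n => f n ω) ≤ ((b : ℝ) : EReal) := by
    rw [ae_all_iff]
    intro b
    by_cases hb : L < ((b : ℝ) : EReal)
    swap
    · exact Eventually.of_forall fun ω h => absurd h hb
    obtain ⟨c, hLc, hcb⟩ := EReal.lt_iff_exists_real_btwn.1 hb
    have hcb' : c < b := EReal.coe_lt_coe_iff.1 hcb
    have hev : ∀ᵐ ω ∂P, ∀ᶠ n : ℕ in atTop,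
        ω ∉ {ω | ENNReal.ofReal (Real.exp (b * n)) ≤ f n ω} := by
      refine ae_eventually_notMem_of_exp_bound_s8 (C := 1) (ε := b - c) (by linarith) ?_
      filter_upwards [eventually_le_exp hLc] with n hn
      rw [ereal_exp_coe_mul_natCast] at hn
      have h1 := (mul_meas_ge_le_lintegral (μ := P) (hf n)
        (ENNReal.ofReal (Real.exp (b * n)))).trans hn
      have h2 := ENNReal.toReal_mono ENNReal.ofReal_ne_top h1
      rw [ENNReal.toReal_mul, ENNReal.toReal_ofReal (Real.exp_pos _).le,
        ENNReal.toReal_ofReal (Real.exp_pos _).le] at h2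
      change _ * P.real _ ≤ _ at h2
      rw [one_mul]
      have h3 : Real.exp (c * n) = Real.exp (b * n) * Real.exp (-(b - c) * n) := by
        rw [← Real.exp_add]; ring_nf
      rw [h3] at h2
      exact le_of_mul_le_mul_left h2 (Real.exp_pos _)
    filter_upwards [hev] with ω hω _
    refine Eventually.expGrowthSup_le ?_
    filter_upwards [hω] with n hn
    rw [ereal_exp_coe_mul_natCast]
    simp only [not_le] at hn
    exact hn.le
  filter_upwards [key] with ω hω
  refine le_of_forall_gt fun b hb => ?_
  obtain ⟨a, ha, hab⟩ := EReal.lt_iff_exists_rat_btwn.1 hb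
  exact (hω a ha).trans_lt hab

end BorelCantelli

section Variance

variable {Ω : Type*} [MeasurableSpace Ω] {P : Measure Ω} [IsProbabilityMeasure P]

lemma sum_range_dist_le_two_mul_tsum {γ : ℕ → ℝ} (hγ0 : ∀ d, 0 ≤ γ d) (hγ : Summable γ)
    (i k : ℕ) : ∑ j ∈ Finset.range k, γ (Nat.dist i j) ≤ 2 * ∑' d, γ d := by
  rw [← Finset.sum_filter_add_sum_filter_not (Finset.range k) (fun j => i ≤ j), two_mul]
  refine add_le_add ?_ ?_
  · have hinj : Set.InjOn (Nat.dist i)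
        ((Finset.range k).filter (fun j => i ≤ j) : Set ℕ) := by
      intro x hx y hy hxy
      simp only [Finset.coe_filter, Finset.mem_range, Set.mem_ofPred_eq] at hx hy
      simp only [Nat.dist] at hxy
      omega
    rw [← Finset.sum_image hinj]
    exact hγ.sum_le_tsum _ fun d _ => hγ0 d
  · have hinj : Set.InjOn (Nat.dist i)
        ((Finset.range k).filter (fun j => ¬ i ≤ j) : Set ℕ) := by
      intro x hx y hy hxy
      simp only [Finset.coe_filter, Finset.mem_range, Set.mem_ofPred_eq] at hx hy
      simp only [Nat.dist] at hxy
      omega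
    rw [← Finset.sum_image hinj]
    exact hγ.sum_le_tsum _ fun d _ => hγ0 d

lemma measureReal_count_le_half_mean {A : ℕ → Set Ω} (hA : ∀ j, MeasurableSet (A j))
    {p : ℝ} (hp : 0 < p) (hAp : ∀ j, P.real (A j) = p)
    {γ : ℕ → ℝ} (hγ0 : ∀ d, 0 ≤ γ d) (hγ : Summable γ)
    (hcov : ∀ i d, |P.real (A i ∩ A (i + d)) - p * p| ≤ γ d) {k : ℕ} (hk : 0 < k) :
    P.real {ω | ∑ j ∈ Finset.range k, (A j).indicator (1 : Ω → ℝ) ω ≤ k * p / 2} ≤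
      8 * (∑' d, γ d) / (k * (p * p)) := by
  set G := ∑' d, γ d
  have hmem : ∀ j, MemLp ((A j).indicator (1 : Ω → ℝ)) 2 P := fun j =>
    memLp_indicator_const 2 (hA j) (1 : ℝ) (Or.inr (measure_ne_top _ _))
  have hint : ∀ j, ∫ ω, (A j).indicator (1 : Ω → ℝ) ω ∂P = p := fun j => by
    rw [integral_indicator_one (hA j), hAp]
  have hcov' : ∀ i j, cov[(A i).indicator (1 : Ω → ℝ), (A j).indicator (1 : Ω → ℝ); P] ≤
      γ (Nat.dist i j) := by
    have aux : ∀ i d, cov[(A i).indicator (1 : Ω → ℝ),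
        (A (i + d)).indicator (1 : Ω → ℝ); P] ≤ γ d := fun i d => by
      rw [covariance_eq_sub (hmem _) (hmem _), hint, hint]
      have : (A i).indicator (1 : Ω → ℝ) * (A (i + d)).indicator (1 : Ω → ℝ) =
          (A i ∩ A (i + d)).indicator 1 := by
        rw [Set.inter_indicator_one]
      rw [this, integral_indicator_one ((hA _).inter (hA _))]
      exact (le_abs_self _).trans (hcov i d)
    intro i j
    rcases le_total i j with h | h
    · obtain ⟨d, rfl⟩ := Nat.exists_eq_add_of_le h
      convert aux i d using 2
      simp [Nat.dist]
    · obtain ⟨d, rfl⟩ := Nat.exists_eq_add_of_le h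
      rw [covariance_comm]
      convert aux j d using 2
      simp [Nat.dist]
  set S : Ω → ℝ := fun ω => ∑ j ∈ Finset.range k, (A j).indicator (1 : Ω → ℝ) ω with hS
  have hSmem : MemLp S 2 P := memLp_finsetSum _ fun j _ => hmem j
  have hmean : ∫ ω, S ω ∂P = k * p := by
    rw [hS, integral_finsetSum _ fun j _ => (hmem j).integrable one_le_two]
    simp [hint]
  have hvar : Var[S; P] ≤ k * (2 * G) := by
    rw [← covariance_self hSmem.aemeasurable,
      covariance_fun_sum_fun_sum' (fun j _ => hmem j) (fun j _ => hmem j)]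
    calc _ ≤ ∑ i ∈ Finset.range k, ∑ j ∈ Finset.range k, γ (Nat.dist i j) :=
          Finset.sum_le_sum fun i _ => Finset.sum_le_sum fun j _ => hcov' i j
      _ ≤ ∑ i ∈ Finset.range k, 2 * G :=
          Finset.sum_le_sum fun i _ => sum_range_dist_le_two_mul_tsum hγ0 hγ i k
      _ = _ := by simp
  have hk' : (0 : ℝ) < k := by exact_mod_cast hk
  have hc : 0 < k * p / 2 := by positivity
  have hcheb := meas_ge_le_variance_div_sq hSmem hc
  have hsub : {ω | S ω ≤ k * p / 2} ⊆ {ω | k * p / 2 ≤ |S ω - P[S]|} := fun ω hω => by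
    simp only [Set.mem_ofPred_eq] at hω ⊢
    rw [hmean, abs_sub_comm]
    exact le_trans (by linarith) (le_abs_self _)
  calc P.real {ω | S ω ≤ k * p / 2} ≤ Var[S; P] / (k * p / 2) ^ 2 := by
        refine ENNReal.toReal_le_of_le_ofReal ?_ ((measure_mono hsub).trans hcheb)
        exact div_nonneg (variance_nonneg _ _) (by positivity)
    _ ≤ k * (2 * G) / (k * p / 2) ^ 2 := by gcongr
    _ = _ := by field_simp; ring

end Variance

section Mixing

/-- Tail integrability of the inverse of the mixing rate gives polynomial decay of every order. -/
lemma summable_rpow_of_lintegral_inverse {α : ℕ → ℝ} (h0 : α 0 = 1 / 2)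
    (hnn : ∀ m, 1 ≤ m → 0 ≤ α m) (hle : ∀ m, 1 ≤ m → α m ≤ 1)
    (hanti : ∀ m m', 1 ≤ m → m ≤ m' → α m' ≤ α m)
    {αinv : ℝ → ℝ≥0∞}
    (hαinv : ∀ u, αinv u = sInf ((fun m : ℕ => (m : ℝ≥0∞)) '' {m | α m ≤ u}))
    (hint : ∀ h : ℝ, 0 < h → ∫⁻ u in Set.Ioc (0 : ℝ) 1, (αinv u) ^ h ∂volume < ⊤)
    {θ : ℝ} (hθ : 0 < θ) : Summable fun m : ℕ => α (m + 1) ^ θ := by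
  set h : ℝ := 2 / θ with hh
  have hhpos : 0 < h := by positivity
  set M : ℝ := (∫⁻ u in Set.Ioc (0 : ℝ) 1, (αinv u) ^ h ∂volume).toReal
  have hlow : ∀ m : ℕ, 1 ≤ m → ∀ u, u < α m / 2 → (m : ℝ≥0∞) ≤ αinv u := by
    intro m hm u hu
    rw [hαinv]
    refine le_sInf ?_
    rintro _ ⟨m', hm', rfl⟩
    simp only [Set.mem_ofPred_eq] at hm'
    by_contra hlt
    have hlt' : m' < m := Nat.cast_lt.1 (not_le.1 hlt)
    have hm1 := hle m hm
    have hm0 := hnn m hm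
    rcases Nat.eq_zero_or_pos m' with rfl | hpos
    · rw [h0] at hm'
      linarith
    · have := hanti m' m hpos hlt'.le
      linarith
  have hbound : ∀ m : ℕ, 1 ≤ m → α m ≤ 2 * M * (m : ℝ) ^ (-h) := by
    intro m hm
    have hm' : (0 : ℝ) < m := by exact_mod_cast hm
    have h1 : ENNReal.ofReal (α m / 2) * (m : ℝ≥0∞) ^ h ≤
        ∫⁻ u in Set.Ioc (0 : ℝ) 1, (αinv u) ^ h ∂volume := by
      calc ENNReal.ofReal (α m / 2) * (m : ℝ≥0∞) ^ h
          = ∫⁻ _ in Set.Ioo (0 : ℝ) (α m / 2), (m : ℝ≥0∞) ^ h ∂volume := by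
            rw [setLIntegral_const, Real.volume_Ioo, sub_zero, mul_comm]
        _ ≤ ∫⁻ u in Set.Ioo (0 : ℝ) (α m / 2), (αinv u) ^ h ∂volume :=
            setLIntegral_mono' measurableSet_Ioo fun u hu =>
              ENNReal.rpow_le_rpow (hlow m hm u hu.2) hhpos.le
        _ ≤ _ := lintegral_mono_set
              (Set.Ioo_subset_Ioc_self.trans (Set.Ioc_subset_Ioc_right (by linarith [hle m hm])))
    have h2 := ENNReal.toReal_mono (hint h hhpos).ne h1
    rw [ENNReal.toReal_mul, ENNReal.toReal_ofReal (by linarith [hnn m hm]),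
      ← ENNReal.toReal_rpow, ENNReal.toReal_natCast] at h2
    rw [Real.rpow_neg hm'.le, ← div_eq_mul_inv, le_div_iff₀ (by positivity)]
    linarith
  have hM0 : 0 ≤ M := ENNReal.toReal_nonneg
  have hsum : Summable fun m : ℕ => (2 * M) ^ θ * (1 / ((m + 1 : ℕ) : ℝ) ^ 2) :=
    ((summable_nat_add_iff 1).2 (Real.summable_one_div_nat_pow.2 one_lt_two)).mul_left _
  refine Summable.of_nonneg_of_le (fun m => Real.rpow_nonneg (hnn _ (by omega)) _) (fun m => ?_)
    hsum
  refine (Real.rpow_le_rpow (hnn _ (by omega)) (hbound (m + 1) (by omega)) hθ.le).trans ?_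
  have hm' : (0 : ℝ) ≤ ((m + 1 : ℕ) : ℝ) := by positivity
  rw [Real.mul_rpow (by positivity) (by positivity), ← Real.rpow_mul hm']
  have : -h * θ = -2 := by rw [hh]; field_simp
  rw [this, Real.rpow_neg hm', Real.rpow_two, one_div]

variable {Ω E : Type*} [MeasurableSpace E]

/-- The `σ`-algebra generated by the coordinates with index in `s`. -/
abbrev coordSigma (X : Ω → ℕ → E) (s : Set ℕ) : MeasurableSpace Ω :=
  ⨆ k ∈ s, MeasurableSpace.comap (fun ω => X ω k) inferInstance

lemma coordSigma_mono (X : Ω → ℕ → E) {s t : Set ℕ} (h : s ⊆ t) :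
    coordSigma X s ≤ coordSigma X t :=
  biSup_mono fun _ hk => h hk

lemma measurable_coord_coordSigma (X : Ω → ℕ → E) {s : Set ℕ} {k : ℕ} (hk : k ∈ s) :
    Measurable[coordSigma X s] fun ω => X ω k :=
  measurable_iff_comap_le.2
    (le_biSup (fun k => MeasurableSpace.comap (fun ω => X ω k) inferInstance) hk)

/-- The sequence `z` frozen at the value `e` from index `N` on. -/
def truncSeq (e : E) (N : ℕ) (z : ℕ → E) : ℕ → E := fun i => if i < N then z i else e

lemma measurable_truncSeq (e : E) (N : ℕ) : Measurable (truncSeq e N) := by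
  refine measurable_pi_lambda _ fun i => ?_
  by_cases h : i < N
  · simpa [truncSeq, h] using measurable_pi_apply i
  · simp [truncSeq, h]

lemma measurable_truncSeq_shift (X : Ω → ℕ → E) (e : E) (N m : ℕ) {s : Set ℕ}
    (hs : ∀ i < N, i + m ∈ s) :
    Measurable[coordSigma X s] fun ω => truncSeq e N (fun i => X ω (i + m)) := by
  refine @measurable_pi_lambda _ _ _ (coordSigma X s) _ _ fun i => ?_
  by_cases h : i < N
  · simpa [truncSeq, h] using measurable_coord_coordSigma X (hs i h)
  · simp [truncSeq, h]

variable [MeasurableSpace Ω] {P : Measure Ω}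

lemma measurable_shift {X : Ω → ℕ → E} (hX : Measurable X) (m : ℕ) :
    Measurable fun ω => fun i => X ω (i + m) :=
  measurable_pi_lambda _ fun i => (measurable_pi_apply (i + m)).comp hX

lemma map_shift_eq {X : Ω → ℕ → E} (hX : Measurable X)
    (hstat : Measure.map (fun ω => fun i => X ω (i + 1)) P = Measure.map X P) (m : ℕ) :
    Measure.map (fun ω => fun i => X ω (i + m)) P = Measure.map X P := by
  induction m with
  | zero => simp
  | succ m ih =>
    have hsh : Measurable fun (z : ℕ → E) => fun i => z (i + m) :=
      measurable_pi_lambda _ fun i => measurable_pi_apply (i + m)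
    have h1 : (fun ω => fun i => X ω (i + (m + 1))) =
        (fun (z : ℕ → E) => fun i => z (i + m)) ∘ (fun ω => fun i => X ω (i + 1)) := by
      funext ω i
      simp [add_assoc]
    rw [h1, ← Measure.map_map hsh (measurable_shift hX 1), hstat, Measure.map_map hsh hX]
    exact ih

lemma measure_shift_preimage {X : Ω → ℕ → E} (hX : Measurable X)
    (hstat : Measure.map (fun ω => fun i => X ω (i + 1)) P = Measure.map X P) (m : ℕ)
    {D : Set (ℕ → E)} (hD : MeasurableSet D) :
    P {ω | (fun i => X ω (i + m)) ∈ D} = P {ω | X ω ∈ D} := by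
  have h := congrArg (fun ν => ν D) (map_shift_eq hX hstat m)
  simp only [Measure.map_apply (measurable_shift hX m) hD, Measure.map_apply hX hD] at h
  exact h

/-- The set of covariances defining the mixing coefficient at time `i` with gap `m`. -/
def mixingSet (P : Measure Ω) (X : Ω → ℕ → E) (i m : ℕ) : Set ℝ :=
  {r : ℝ | ∃ A B : Set Ω, MeasurableSet[coordSigma X (Set.Iic i)] A ∧
    MeasurableSet[coordSigma X (Set.Ici (i + m))] B ∧
    r = |(P A).toReal * (P B).toReal - (P (A ∩ B)).toReal|}

lemma mixing_nonneg (X : Ω → ℕ → E) (m : ℕ) : 0 ≤ ⨆ i, sSup (mixingSet P X i m) :=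
  Real.iSup_nonneg fun i => Real.sSup_nonneg (by
    rintro r ⟨A, B, -, -, rfl⟩
    exact abs_nonneg _)

variable [IsProbabilityMeasure P]

lemma abs_mul_sub_measureReal_inter_le_one (A B : Set Ω) :
    |(P A).toReal * (P B).toReal - (P (A ∩ B)).toReal| ≤ 1 := by
  have h (C : Set Ω) : 0 ≤ (P C).toReal ∧ (P C).toReal ≤ 1 :=
    ⟨ENNReal.toReal_nonneg, measureReal_le_one⟩
  have hA := h A
  have hB := h B
  have hC := h (A ∩ B)
  have := mul_le_one₀ hA.2 hB.1 hB.2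
  have := mul_nonneg hA.1 hB.1
  rw [abs_le]
  constructor <;> linarith

lemma sSup_mixingSet_le_one (X : Ω → ℕ → E) (i m : ℕ) : sSup (mixingSet P X i m) ≤ 1 :=
  Real.sSup_le (by rintro r ⟨A, B, -, -, rfl⟩; exact abs_mul_sub_measureReal_inter_le_one A B)
    zero_le_one

lemma abs_mul_sub_measureReal_inter_le_mixing {X : Ω → ℕ → E} {i m : ℕ} {A B : Set Ω}
    (hA : MeasurableSet[coordSigma X (Set.Iic i)] A)
    (hB : MeasurableSet[coordSigma X (Set.Ici (i + m))] B) :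
    |(P A).toReal * (P B).toReal - (P (A ∩ B)).toReal| ≤ ⨆ i, sSup (mixingSet P X i m) := by
  refine le_trans (le_csSup (s := mixingSet P X i m) ⟨1, ?_⟩ ⟨A, B, hA, hB, rfl⟩)
    (le_ciSup (f := fun i => sSup (mixingSet P X i m)) ⟨1, ?_⟩ i)
  · rintro r ⟨A, B, -, -, rfl⟩
    exact abs_mul_sub_measureReal_inter_le_one A B
  · rintro _ ⟨j, rfl⟩
    exact sSup_mixingSet_le_one X j m

lemma mixing_antitone (X : Ω → ℕ → E) {m m' : ℕ} (h : m ≤ m') :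
    ⨆ i, sSup (mixingSet P X i m') ≤ ⨆ i, sSup (mixingSet P X i m) := by
  refine Real.iSup_le (fun i => Real.sSup_le ?_ (mixing_nonneg X m)) (mixing_nonneg X m)
  rintro r ⟨A, B, hA, hB, rfl⟩
  refine abs_mul_sub_measureReal_inter_le_mixing (i := i) hA ?_
  exact coordSigma_mono X (fun j hj => by simp only [Set.mem_Ici] at hj ⊢; omega) B hB

end Mixing

section BlockEmpirical

open ExpGrowth

/-- The empirical measure of a functional `F` over `k` consecutive blocks of length `n`. -/
noncomputable def blockEmpirical {Ω E Y : Type*} [MeasurableSpace Y]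
    (X : Ω → ℕ → E) (F : (ℕ → E) → Y) (n k : ℕ) (ω : Ω) :
    Measure Y :=
  (k : ℝ≥0∞)⁻¹ • ∑ j ∈ Finset.Icc 1 k, Measure.dirac (F fun i => X ω (i + (j - 1) * n))

lemma blockEmpirical_apply {Ω E Y : Type*} [MeasurableSpace Y]
    (X : Ω → ℕ → E) (F : (ℕ → E) → Y) (n k : ℕ) (ω : Ω) {B : Set Y}
    (hB : MeasurableSet B) :
    blockEmpirical X F n k ω B =
      (k : ℝ≥0∞)⁻¹ * ∑ j ∈ Finset.range k, B.indicator 1 (F fun i => X ω (i + j * n)) := by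
  simp only [blockEmpirical, Measure.smul_apply, Measure.finsetSum_apply, smul_eq_mul,
    Measure.dirac_apply' _ hB]
  congr 1
  refine Finset.sum_nbij' (fun j => j - 1) (fun j => j + 1) ?_ ?_ ?_ ?_ ?_ <;>
    intro j hj <;> simp only [Finset.mem_Icc, Finset.mem_range] at * <;> omega

variable {Ω : Type*} [MeasurableSpace Ω] {P : Measure Ω} {E : Type*} [MeasurableSpace E]

/-- The mixing coefficient with gap `m`. -/
noncomputable def mixingCoeff (P : Measure Ω) (X : Ω → ℕ → E) (m : ℕ) : ℝ :=
  ⨆ i, sSup (mixingSet P X i m)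

/-- The event that the `j`-th block of length `n`, observed on `2 * n` coordinates, lies in `D`. -/
def blockEvent (X : Ω → ℕ → E) (e : E) (D : Set (ℕ → E)) (n j : ℕ) : Set Ω :=
  {ω | truncSeq e (2 * n) (fun i => X ω (i + j * n)) ∈ D}

lemma measurableSet_blockEvent {X : Ω → ℕ → E} (hX : Measurable X) (e : E) {D : Set (ℕ → E)}
    (hD : MeasurableSet D) (n j : ℕ) : MeasurableSet (blockEvent X e D n j) :=
  ((measurable_truncSeq e (2 * n)).comp (measurable_shift hX (j * n))) hD

lemma measureReal_blockEvent {X : Ω → ℕ → E} (hX : Measurable X)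
    (hstat : Measure.map (fun ω => fun i => X ω (i + 1)) P = Measure.map X P) (e : E)
    {D : Set (ℕ → E)} (hD : MeasurableSet D) (n j : ℕ) :
    P.real (blockEvent X e D n j) = P.real (blockEvent X e D n 0) := by
  have h := fun m => measure_shift_preimage hX hstat m (measurable_truncSeq e (2 * n) hD)
  exact congrArg ENNReal.toReal ((h (j * n)).trans (h (0 * n)).symm)

/-- The covariance bound between blocks at distance `d`, relative to a power of the block
probability. -/
noncomputable def blockCovBound (P : Measure Ω) (X : Ω → ℕ → E) (θ : ℝ) (d : ℕ) : ℝ :=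
  if d ≤ 1 then 1 else mixingCoeff P X (d - 1) ^ θ

lemma blockCovBound_nonneg (X : Ω → ℕ → E) (θ : ℝ) (d : ℕ) : 0 ≤ blockCovBound P X θ d := by
  unfold blockCovBound
  split_ifs
  · exact zero_le_one
  · exact Real.rpow_nonneg (mixing_nonneg X _) _

lemma summable_blockCovBound {X : Ω → ℕ → E} {θ : ℝ}
    (h : Summable fun m => mixingCoeff P X (m + 1) ^ θ) : Summable (blockCovBound P X θ) := by
  rw [← summable_nat_add_iff 2]
  refine h.congr fun m => ?_
  simp [blockCovBound]

lemma measurable_blockEmpirical {X : Ω → ℕ → E} (hX : Measurable X) {Y : Type*} [MeasurableSpace Y]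
    {F : (ℕ → E) → Y}
    (hF : Measurable F) (n k : ℕ) {B : Set Y} (hB : MeasurableSet B) :
    Measurable fun ω => blockEmpirical X F n k ω B := by
  simp only [blockEmpirical_apply _ _ _ _ _ hB]
  refine Measurable.const_mul (Finset.measurable_fun_sum _ fun j _ => ?_) _
  exact (measurable_one.indicator hB).comp (hF.comp (measurable_shift hX (j * n)))

lemma lintegral_blockEmpirical {X : Ω → ℕ → E} (hX : Measurable X)
    (hstat : Measure.map (fun ω => fun i => X ω (i + 1)) P = Measure.map X P)
    {Y : Type*} [MeasurableSpace Y]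
    {F : (ℕ → E) → Y} (hF : Measurable F) (n : ℕ) {k : ℕ} (hk : 0 < k) {B : Set Y}
    (hB : MeasurableSet B) :
    ∫⁻ ω, blockEmpirical X F n k ω B ∂P = Measure.map (fun ω => F (X ω)) P B := by
  simp only [blockEmpirical_apply _ _ _ _ _ hB]
  have hmeas : ∀ j : ℕ,
      Measurable fun ω => B.indicator (1 : Y → ℝ≥0∞) (F fun i => X ω (i + j * n)) := fun j =>
    (measurable_one.indicator hB).comp (hF.comp (measurable_shift hX (j * n)))
  have hone : ∀ j : ℕ, ∫⁻ ω, B.indicator (1 : Y → ℝ≥0∞) (F fun i => X ω (i + j * n)) ∂P =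
      Measure.map (fun ω => F (X ω)) P B := fun j => by
    rw [Measure.map_apply (f := fun ω => F (X ω)) (hF.comp hX) hB]
    refine Eq.trans ?_ (measure_shift_preimage hX hstat (j * n) (hF hB))
    exact lintegral_indicator_one ((hF.comp (measurable_shift hX (j * n))) hB)
  rw [lintegral_const_mul _ (Finset.measurable_fun_sum _ fun j _ => hmeas j),
    lintegral_finsetSum _ fun j _ => hmeas j]
  simp only [hone, Finset.sum_const, Finset.card_range, nsmul_eq_mul]
  rw [← mul_assoc, ENNReal.inv_mul_cancel (by exact_mod_cast hk.ne') (ENNReal.natCast_ne_top k),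
    one_mul]

variable [IsProbabilityMeasure P]

lemma abs_measureReal_inter_blockEvent_le {X : Ω → ℕ → E} (hX : Measurable X)
    (hstat : Measure.map (fun ω => fun i => X ω (i + 1)) P = Measure.map X P) (e : E)
    {D : Set (ℕ → E)} (hD : MeasurableSet D) {n : ℕ} (hn : 0 < n) {θ : ℝ} (hθ0 : 0 < θ)
    (hθ1 : θ < 1) {p : ℝ} (hp : 0 < p) (hpD : P.real (blockEvent X e D n 0) = p) (i d : ℕ) :
    |P.real (blockEvent X e D n i ∩ blockEvent X e D n (i + d)) - p * p| ≤
      p ^ (1 - θ) * blockCovBound P X θ d := by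
  have hpj : ∀ j, P.real (blockEvent X e D n j) = p := fun j =>
    (measureReal_blockEvent hX hstat e hD n j).trans hpD
  have hp1 : p ≤ 1 := hpD ▸ measureReal_le_one
  set x := |P.real (blockEvent X e D n i ∩ blockEvent X e D n (i + d)) - p * p| with hx
  have hxp : x ≤ p := by
    have h1 : P.real (blockEvent X e D n i ∩ blockEvent X e D n (i + d)) ≤ p :=
      (measureReal_mono Set.inter_subset_left).trans (hpj i).le
    have h2 : 0 ≤ P.real (blockEvent X e D n i ∩ blockEvent X e D n (i + d)) :=
      measureReal_nonneg
    rw [hx, abs_le]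
    constructor <;> nlinarith
  have hx0 : 0 ≤ x := abs_nonneg _
  unfold blockCovBound
  split_ifs with hd
  · rw [mul_one]
    calc x ≤ p ^ (1 : ℝ) := by rwa [Real.rpow_one]
      _ ≤ p ^ (1 - θ) := Real.rpow_le_rpow_of_exponent_ge hp hp1 (by linarith)
  · obtain ⟨d', rfl⟩ : ∃ d', d = d' + 2 := ⟨d - 2, by omega⟩
    have hxa : x ≤ mixingCoeff P X (d' + 2 - 1) := by
      have hA : MeasurableSet[coordSigma X (Set.Iic (i * n + (2 * n - 1)))]
          (blockEvent X e D n i) :=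
        measurable_truncSeq_shift X e (2 * n) (i * n)
          (fun l hl => by simp only [Set.mem_Iic]; omega) hD
      have hB : MeasurableSet[coordSigma X
          (Set.Ici (i * n + (2 * n - 1) + (d' + 2 - 1)))] (blockEvent X e D n (i + (d' + 2))) :=
        measurable_truncSeq_shift X e (2 * n) ((i + (d' + 2)) * n)
          (fun l _ => by
            simp only [Set.mem_Ici]
            have h1 : (i + (d' + 2)) * n = i * n + d' * n + 2 * n := by ring
            have h2 : d' ≤ d' * n := Nat.le_mul_of_pos_right d' hn
            omega) hD
      have := abs_mul_sub_measureReal_inter_le_mixing (P := P) hA hB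
      change |P.real _ * P.real _ - P.real _| ≤ _ at this
      rw [hpj, hpj, abs_sub_comm] at this
      exact this
    calc x = x ^ (1 - θ) * x ^ θ := by
          rw [← Real.rpow_add' hx0 (by norm_num), sub_add_cancel, Real.rpow_one]
      _ ≤ _ := mul_le_mul (Real.rpow_le_rpow hx0 hxp (by linarith))
          (Real.rpow_le_rpow hx0 hxa hθ0.le) (Real.rpow_nonneg hx0 _)
          (Real.rpow_nonneg hp.le _)

lemma measureReal_blockCount_le {X : Ω → ℕ → E} (hX : Measurable X)
    (hstat : Measure.map (fun ω => fun i => X ω (i + 1)) P = Measure.map X P) (e : E)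
    {D : Set (ℕ → E)} (hD : MeasurableSet D) {n : ℕ} (hn : 0 < n) {θ : ℝ} (hθ0 : 0 < θ)
    (hθ1 : θ < 1) (hsum : Summable fun m => mixingCoeff P X (m + 1) ^ θ)
    {p : ℝ} (hp : 0 < p) (hpD : P.real (blockEvent X e D n 0) = p) {k : ℕ} (hk : 0 < k) :
    P.real {ω | ∑ j ∈ Finset.range k, (blockEvent X e D n j).indicator (1 : Ω → ℝ) ω ≤
      k * p / 2} ≤ 8 * (∑' d, blockCovBound P X θ d) / (k * p ^ (1 + θ)) := by
  have hk' : (0 : ℝ) < k := by exact_mod_cast hk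
  have hq : 0 < p ^ (1 - θ) := Real.rpow_pos_of_pos hp _
  refine (measureReal_count_le_half_mean (fun j => measurableSet_blockEvent hX e hD n j) hp
    (fun j => (measureReal_blockEvent hX hstat e hD n j).trans hpD)
    (γ := fun d => p ^ (1 - θ) * blockCovBound P X θ d)
    (fun d => mul_nonneg hq.le (blockCovBound_nonneg X θ d))
    ((summable_blockCovBound hsum).mul_left _)
    (abs_measureReal_inter_blockEvent_le hX hstat e hD hn hθ0 hθ1 hp hpD) hk).trans_eq ?_
  rw [tsum_mul_left]
  have h : p * p = p ^ (1 - θ) * p ^ (1 + θ) := by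
    rw [← Real.rpow_add hp]
    ring_nf
    simp [sq]
  rw [h]
  have : 0 < p ^ (1 + θ) := Real.rpow_pos_of_pos hp _
  field_simp

variable {Y : Type*} [NormedAddCommGroup Y] [MeasurableSpace Y] [BorelSpace Y]

lemma ae_le_expGrowthInf_blockEmpirical {X : Ω → ℕ → E} (hX : Measurable X)
    (hstat : Measure.map (fun ω => fun i => X ω (i + 1)) P = Measure.map X P)
    (hmix : ∀ θ : ℝ, 0 < θ → Summable fun m => mixingCoeff P X (m + 1) ^ θ)
    {F : ℕ → (ℕ → E) → Y} (hF : ∀ n, Measurable (F n)) (e : E) {η : ℕ → ℝ}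
    (hη0 : Tendsto η atTop (𝓝 0))
    (hη : ∀ n, 0 < n → ∀ z, ‖F n z - F n (truncSeq e (2 * n) z)‖ ≤ η n)
    {k : ℕ → ℕ} (hk : ∀ n, 0 < k n) {a : ℝ} (ha : 0 ≤ a)
    (hak : (a : EReal) < expGrowthInf fun n => (k n : ℝ≥0∞)) (q : Y) {r : ℝ} (hr : 0 < r)
    (hμ : ((-a : ℝ) : EReal) <
      expGrowthInf fun n => Measure.map (fun ω => F n (X ω)) P (Metric.ball q (1 * r))) :
    ∀ᵐ ω ∂P, ((-a : ℝ) : EReal) ≤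
      expGrowthInf fun n => blockEmpirical X (F n) n (k n) ω (Metric.ball q (3 * r)) := by
  obtain ⟨c, hac, hck⟩ := EReal.lt_iff_exists_real_btwn.1 hak
  obtain ⟨b, hab, hbμ⟩ := EReal.lt_iff_exists_real_btwn.1 hμ
  replace hac : a < c := EReal.coe_lt_coe_iff.1 hac
  replace hab : -a < b := EReal.coe_lt_coe_iff.1 hab
  set θ : ℝ := (c - a) / (c + a + 1) with hθ
  have hden : 0 < c + a + 1 := by linarith
  have hθ0 : 0 < θ := div_pos (by linarith) hden
  have hθ1 : θ < 1 := by rw [hθ, div_lt_one hden]; linarith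
  have hε : 0 < c - a * (1 + θ) := by
    have : a * θ < c - a := by
      rw [hθ, ← mul_div_assoc, div_lt_iff₀ hden]
      nlinarith
    linarith
  set D : ℕ → Set (ℕ → E) := fun n => {z | F n z ∈ Metric.ball q (2 * r)}
  have hD : ∀ n, MeasurableSet (D n) := fun n => hF n Metric.isOpen_ball.measurableSet
  set p : ℕ → ℝ := fun n => P.real (blockEvent X e (D n) n 0)
  have hclose : ∀ᶠ n in atTop, 0 < n ∧ η n < r :=
    (eventually_gt_atTop 0).and (hη0.eventually_lt_const hr)
  have hpn : ∀ᶠ n : ℕ in atTop, Real.exp (b * n) ≤ p n := by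
    filter_upwards [hclose, eventually_exp_le hbμ] with n hn hexp
    rw [ereal_exp_coe_mul_natCast,
      Measure.map_apply (f := fun ω => F n (X ω)) ((hF n).comp hX)
        Metric.isOpen_ball.measurableSet] at hexp
    have hsub : (fun ω => F n (X ω)) ⁻¹' Metric.ball q (1 * r) ⊆
        blockEvent X e (D n) n 0 := by
      intro ω hω
      simp only [Set.mem_preimage, Metric.mem_ball, one_mul] at hω
      change F n (truncSeq e (2 * n) fun i => X ω (i + 0 * n)) ∈ Metric.ball q (2 * r)
      simp only [zero_mul, add_zero, Metric.mem_ball]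
      have h1 := hη n hn.1 (X ω)
      rw [← dist_eq_norm, dist_comm] at h1
      have h2 := dist_triangle (F n (truncSeq e (2 * n) (X ω))) (F n (X ω)) q
      change dist (F n (truncSeq e (2 * n) (X ω))) q < _
      linarith [hn.2]
    exact (ENNReal.ofReal_le_iff_le_toReal (measure_ne_top _ _)).1
      (hexp.trans (measure_mono hsub))
  have hkn : ∀ᶠ n : ℕ in atTop, Real.exp (c * n) ≤ k n := by
    filter_upwards [eventually_exp_le hck] with n hexp
    rw [ereal_exp_coe_mul_natCast] at hexp
    simpa using (ENNReal.ofReal_le_iff_le_toReal (ENNReal.natCast_ne_top _)).1 hexp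
  set G := ∑' d, blockCovBound P X θ d
  have hG0 : 0 ≤ G := tsum_nonneg fun d => blockCovBound_nonneg X θ d
  have hae := ae_eventually_notMem_of_exp_bound_s8 (P := P) (C := 8 * G) hε
    (s := fun n => {ω | ∑ j ∈ Finset.range (k n),
      (blockEvent X e (D n) n j).indicator (1 : Ω → ℝ) ω ≤ k n * p n / 2}) (by
    filter_upwards [hclose, hpn, hkn] with n hn hpn hkn
    have hp0 : 0 < p n := (Real.exp_pos _).trans_le hpn
    refine (measureReal_blockCount_le hX hstat e (hD n) hn.1 hθ0 hθ1 (hmix θ hθ0) hp0 rfl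
      (hk n)).trans ?_
    have h1 : Real.exp (-a * n) ≤ p n := (Real.exp_le_exp.2 (by gcongr)).trans hpn
    have h2 : Real.exp ((c - a * (1 + θ)) * n) ≤ k n * p n ^ (1 + θ) := by
      calc Real.exp ((c - a * (1 + θ)) * n)
          = Real.exp (c * n) * Real.exp (-a * n) ^ (1 + θ) := by
            rw [← Real.exp_mul, ← Real.exp_add]; ring_nf
        _ ≤ _ := mul_le_mul hkn (Real.rpow_le_rpow (Real.exp_pos _).le h1 (by linarith))
            (Real.rpow_nonneg (Real.exp_pos _).le _) (by positivity)
    calc 8 * G / (k n * p n ^ (1 + θ)) ≤ 8 * G / Real.exp ((c - a * (1 + θ)) * n) := by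
          gcongr
      _ = 8 * G * Real.exp (-(c - a * (1 + θ)) * n) := by
          rw [neg_mul, Real.exp_neg, div_eq_mul_inv])
  have hhalf : ∀ᶠ n : ℕ in atTop, Real.exp (-a * n) ≤ Real.exp (b * n) / 2 := by
    have : Tendsto (fun n : ℕ => Real.exp ((b + a) * n)) atTop atTop :=
      Real.tendsto_exp_atTop.comp
        (tendsto_natCast_atTop_atTop.const_mul_atTop (by linarith))
    filter_upwards [this.eventually_ge_atTop 2] with n hn
    have : Real.exp (b * n) = Real.exp (-a * n) * Real.exp ((b + a) * n) := by
      rw [← Real.exp_add]; ring_nf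
    rw [this]
    nlinarith [Real.exp_pos (-a * n)]
  filter_upwards [hae] with ω hω
  refine Eventually.le_expGrowthInf ?_
  filter_upwards [hω, hclose, hpn, hhalf] with n hω hn hpn hhalf
  rw [ereal_exp_coe_mul_natCast, blockEmpirical_apply _ _ _ _ _ Metric.isOpen_ball.measurableSet,
    mul_comm (_⁻¹), ← div_eq_mul_inv]
  have hk0 : (0 : ℝ) < k n := by exact_mod_cast hk n
  rw [ENNReal.le_div_iff_mul_le (Or.inl (by exact_mod_cast (hk n).ne'))
    (Or.inl (ENNReal.natCast_ne_top _))]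
  have hcount : ENNReal.ofReal (∑ j ∈ Finset.range (k n),
      (blockEvent X e (D n) n j).indicator (1 : Ω → ℝ) ω) ≤
      ∑ j ∈ Finset.range (k n), (Metric.ball q (3 * r)).indicator (1 : Y → ℝ≥0∞)
        (F n fun i => X ω (i + j * n)) := by
    rw [ENNReal.ofReal_sum_of_nonneg fun j _ =>
      Set.indicator_nonneg (f := (1 : Ω → ℝ)) (fun _ _ => zero_le_one) ω]
    refine Finset.sum_le_sum fun j _ => ?_
    by_cases hj : ω ∈ blockEvent X e (D n) n j
    · have hj3 : F n (fun i => X ω (i + j * n)) ∈ Metric.ball q (3 * r) := by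
        have hj2 : dist (F n (truncSeq e (2 * n) fun i => X ω (i + j * n))) q < 2 * r := hj
        have h1 := hη n hn.1 fun i => X ω (i + j * n)
        rw [← dist_eq_norm] at h1
        have h2 := dist_triangle (F n fun i => X ω (i + j * n))
          (F n (truncSeq e (2 * n) fun i => X ω (i + j * n))) q
        rw [Metric.mem_ball]
        linarith [hn.2]
      rw [Set.indicator_of_mem hj, Set.indicator_of_mem hj3]
      simp
    · rw [Set.indicator_of_notMem hj]
      simp
  refine le_trans ?_ hcount
  rw [← ENNReal.ofReal_natCast, ← ENNReal.ofReal_mul (Real.exp_pos _).le]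
  refine ENNReal.ofReal_le_ofReal ?_
  rw [not_le] at hω
  nlinarith

end BlockEmpirical

/-- **Theorem 4.**
Assume `𝒴` separable and (A1), (A2), (A3).  If either `sup_{x ∈ D_I} I(x) < ∞` and
`liminf (log k(n))/n > sup_{x ∈ D_I} I(x)`, or `(log k(n))/n → ∞`, then almost surely
`(μₙ^ω)` satisfies the weak LDP with rate function `I` (lower bound for all sets, upper
bound for compact sets); and if moreover `(μₙ)` is exponentially tight, then almost surely
`(μₙ^ω)` satisfies the full LDP with good rate function `I`. -/
theorem theorem4
    {Ω : Type*} [MeasurableSpace Ω] (P : Measure Ω) [IsProbabilityMeasure P]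
    {E : Type*} [MeasurableSpace E]
    {𝒴 : Type*} [NormedAddCommGroup 𝒴] [NormedSpace ℝ 𝒴]
    [MeasurableSpace 𝒴] [BorelSpace 𝒴]
    -- the stationary process
    (Xseq : Ω → ℕ → E) (hXmeas : Measurable Xseq)
    (hstat : Measure.map (fun ω => fun i => Xseq ω (i + 1)) P = Measure.map Xseq P)
    -- the functionals SₙΦ
    (SΦ : ℕ → (ℕ → E) → 𝒴) (hSΦmeas : ∀ n, Measurable (SΦ n))
    -- the laws μₙ of SₙΦ(X)/n
    (μ : ℕ → Measure 𝒴)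
    (hμ : ∀ n, μ n = Measure.map (fun ω => (n : ℝ)⁻¹ • SΦ n (Xseq ω)) P)
    -- (A1): LDP with rate function I
    (I : 𝒴 → ℝ≥0∞) (hIlsc : LowerSemicontinuous I)
    (hLDP : ∀ Γ : Set 𝒴,
      -(⨅ x ∈ interior Γ, (I x : EReal)) ≤
          Filter.atTop.liminf (fun n : ℕ => ((n : ℝ)⁻¹ : EReal) * ENNReal.log (μ n Γ)) ∧
        Filter.atTop.limsup (fun n : ℕ => ((n : ℝ)⁻¹ : EReal) * ENNReal.log (μ n Γ)) ≤
          -(⨅ x ∈ closure Γ, (I x : EReal)))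
    -- (A2): mixing
    (alphaX : ℕ → ℝ) (halpha0 : alphaX 0 = 1 / 2)
    (halpha : ∀ m, 1 ≤ m → alphaX m = ⨆ i : ℕ, sSup {r : ℝ | ∃ A B : Set Ω,
      MeasurableSet[⨆ kk ∈ Set.Iic i,
        MeasurableSpace.comap (fun ω => Xseq ω kk) inferInstance] A ∧
      MeasurableSet[⨆ jj ∈ Set.Ici (i + m),
        MeasurableSpace.comap (fun ω => Xseq ω jj) inferInstance] B ∧
      r = |(P A).toReal * (P B).toReal - (P (A ∩ B)).toReal|})
    (αinv : ℝ → ℝ≥0∞)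
    (hαinv : ∀ u, αinv u = sInf ((fun m : ℕ => (m : ℝ≥0∞)) '' {m | alphaX m ≤ u}))
    (hA2 : ∀ h : ℝ, 0 < h → ∫⁻ u in Set.Ioc (0 : ℝ) 1, (αinv u) ^ h ∂volume < ⊤)
    -- (A3): approximation by functions of 2n coordinates
    (SΦapp : ℕ → (ℕ → E) → 𝒴)
    (happdep : ∀ n (z z' : ℕ → E), (∀ i < 2 * n, z i = z' i) → SΦapp n z = SΦapp n z')
    (δ : ℕ → ℝ) (hδ0 : Tendsto δ atTop (nhds 0))
    (hδ : ∀ n z, ‖SΦ n z - SΦapp n z‖ ≤ (n : ℝ) * δ n)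
    -- the empirical measures μₙ^ω
    (k : ℕ → ℕ) (hkpos : ∀ n, 0 < k n)
    (μω : ℕ → Ω → Measure 𝒴)
    (hμω : ∀ n ω, μω n ω = (k n : ℝ≥0∞)⁻¹ •
      ∑ j ∈ Finset.Icc 1 (k n),
        Measure.dirac ((n : ℝ)⁻¹ • SΦ n (fun i => Xseq ω (i + (j - 1) * n))))
    [TopologicalSpace.SeparableSpace 𝒴]
    -- growth condition on k(n)
    (hk : ((⨆ x ∈ {y : 𝒴 | I y ≠ ⊤}, I x) ≠ ⊤ ∧
        ((⨆ x ∈ {y : 𝒴 | I y ≠ ⊤}, I x : ℝ≥0∞) : EReal) <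
          Filter.atTop.liminf (fun n => ((Real.log (k n) / n : ℝ) : EReal))) ∨
      Tendsto (fun n => Real.log (k n) / n) atTop atTop) :
    (∀ᵐ ω ∂P,
      (∀ Γ : Set 𝒴,
        -(⨅ x ∈ interior Γ, (I x : EReal)) ≤
          Filter.atTop.liminf (fun n : ℕ =>
            ((n : ℝ)⁻¹ : EReal) * ENNReal.log (μω n ω Γ))) ∧
      (∀ K : Set 𝒴, IsCompact K →
        Filter.atTop.limsup (fun n : ℕ =>
            ((n : ℝ)⁻¹ : EReal) * ENNReal.log (μω n ω K)) ≤
          -(⨅ x ∈ K, (I x : EReal)))) ∧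
    ((∀ α : ℝ, ∃ K : Set 𝒴, IsCompact K ∧
        Filter.atTop.limsup (fun n : ℕ => ((n : ℝ)⁻¹ : EReal) * ENNReal.log (μ n Kᶜ)) ≤
          ((-α : ℝ) : EReal)) →
      (∀ c : ℝ≥0∞, c ≠ ⊤ → IsCompact {x : 𝒴 | I x ≤ c}) ∧
      ∀ᵐ ω ∂P, ∀ Γ : Set 𝒴,
        -(⨅ x ∈ interior Γ, (I x : EReal)) ≤
            Filter.atTop.liminf (fun n : ℕ =>
              ((n : ℝ)⁻¹ : EReal) * ENNReal.log (μω n ω Γ)) ∧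
          Filter.atTop.limsup (fun n : ℕ =>
              ((n : ℝ)⁻¹ : EReal) * ENNReal.log (μω n ω Γ)) ≤
            -(⨅ x ∈ closure Γ, (I x : EReal))) := by
  obtain ⟨ω₀⟩ : Nonempty Ω := nonempty_of_isProbabilityMeasure P
  set e : E := Xseq ω₀ 0
  set F : ℕ → (ℕ → E) → 𝒴 := fun n z => (n : ℝ)⁻¹ • SΦ n z with hFdef
  have hF : ∀ n, Measurable (F n) := fun n => (hSΦmeas n).const_smul _
  have hFμ : ∀ n, μ n = Measure.map (fun ω => F n (Xseq ω)) P := hμ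
  have hFμω : ∀ n ω, μω n ω = blockEmpirical Xseq (F n) n (k n) ω := hμω
  have hclose : ∀ n, 0 < n → ∀ z, ‖F n z - F n (truncSeq e (2 * n) z)‖ ≤ 2 * δ n := by
    intro n hn z
    have hn' : (0 : ℝ) < n := by exact_mod_cast hn
    have happ : SΦapp n z = SΦapp n (truncSeq e (2 * n) z) :=
      happdep n _ _ fun i hi => by simp [truncSeq, hi]
    have h1 := hδ n z
    have h2 := hδ n (truncSeq e (2 * n) z)
    rw [← happ, norm_sub_rev] at h2
    have h3 := norm_add_le (SΦ n z - SΦapp n z) (SΦapp n z - SΦ n (truncSeq e (2 * n) z))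
    rw [sub_add_sub_cancel] at h3
    rw [hFdef]
    simp only
    rw [← smul_sub, norm_smul, norm_inv, Real.norm_natCast, inv_mul_le_iff₀ hn']
    linarith
  have hη0 : Tendsto (fun n => 2 * δ n) atTop (𝓝 0) := by simpa using hδ0.const_mul 2
  have hα : ∀ m, 1 ≤ m → alphaX m = mixingCoeff P Xseq m := halpha
  have hmix : ∀ θ : ℝ, 0 < θ → Summable fun m => mixingCoeff P Xseq (m + 1) ^ θ := by
    intro θ hθ
    refine (summable_rpow_of_lintegral_inverse halpha0
      (fun m hm => (hα m hm).symm ▸ mixing_nonneg Xseq m)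
      (fun m hm => (hα m hm).symm ▸ Real.iSup_le (fun i => sSup_mixingSet_le_one Xseq i m)
        zero_le_one)
      (fun m m' hm hmm' => ?_) hαinv hA2 hθ).congr fun m => ?_
    · rw [hα m hm, hα m' (hm.trans hmm')]
      exact mixing_antitone Xseq hmm'
    · rw [hα (m + 1) (by omega)]
  have hklog : (fun n : ℕ => ((Real.log (k n) / n : ℝ) : EReal)) =
      fun n => ENNReal.log (k n : ℝ≥0∞) / n := by
    funext n
    rw [← ENNReal.ofReal_natCast (k n),
      ENNReal.log_ofReal_of_pos (by exact_mod_cast hkpos n), EReal.coe_div]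
    rfl
  have hkI : ∀ x, I x ≠ ⊤ → (I x : EReal) < ExpGrowth.expGrowthInf fun n => (k n : ℝ≥0∞) := by
    intro x hx
    unfold ExpGrowth.expGrowthInf
    rw [← hklog]
    rcases hk with ⟨-, hk⟩ | hk
    · refine lt_of_le_of_lt (EReal.coe_ennreal_le_coe_ennreal_iff.2 ?_) hk
      exact le_iSup₂_of_le x hx le_rfl
    · have : Tendsto (fun n : ℕ => ((Real.log (k n) / n : ℝ) : EReal)) atTop (𝓝 ⊤) :=
        EReal.tendsto_coe_nhds_top_iff.2 hk
      rw [this.liminf_eq, lt_top_iff_ne_top]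
      simpa using hx
  simp only [ereal_inv_mul_log_eq_div] at hLDP ⊢
  have hlower : ∀ Γ : Set 𝒴, -(⨅ x ∈ interior Γ, (I x : EReal)) ≤
      ExpGrowth.expGrowthInf fun n => μ n Γ := fun Γ => (hLDP Γ).1
  have hupper : ∀ Γ : Set 𝒴, (ExpGrowth.expGrowthSup fun n => μ n Γ) ≤
      -(⨅ x ∈ closure Γ, (I x : EReal)) := fun Γ => (hLDP Γ).2
  have hsup : ∀ B : Set 𝒴, MeasurableSet B → ∀ᵐ ω ∂P,
      (ExpGrowth.expGrowthSup fun n => μω n ω B) ≤ ExpGrowth.expGrowthSup fun n => μ n B := by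
    intro B hB
    have h := ae_expGrowthSup_le (P := P)
      (f := fun n ω => blockEmpirical Xseq (F n) n (k n) ω B)
      fun n => measurable_blockEmpirical hXmeas (hF n) n (k n) hB
    simp only [lintegral_blockEmpirical hXmeas hstat (hF _) _ (hkpos _) hB, ← hFμ] at h
    simpa only [hFμω] using h
  have hae_compact : ∀ᵐ ω ∂P, ∀ K : Set 𝒴, IsCompact K →
      (ExpGrowth.expGrowthSup fun n => μω n ω K) ≤ -(⨅ x ∈ K, (I x : EReal)) := by
    have h : ∀ᵐ ω ∂P, ∀ p, (ExpGrowth.expGrowthSup fun n => μω n ω (baseBall 𝒴 1 p)) ≤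
        ExpGrowth.expGrowthSup fun n => μ n (baseBall 𝒴 1 p) :=
      ae_all_iff.2 fun p => hsup _ (isOpen_baseBall 1 p).measurableSet
    filter_upwards [h] with ω hω K hK
    exact expGrowthSup_compact_le (μ := μ) (ν := fun n => μω n ω) hIlsc hupper hω hK
  have hae_lower : ∀ᵐ ω ∂P, ∀ Γ : Set 𝒴, -(⨅ x ∈ interior Γ, (I x : EReal)) ≤
      ExpGrowth.expGrowthInf fun n => μω n ω Γ := by
    have h : ∀ᵐ ω ∂P, ∀ (p : ℕ × ℕ) (a : ℚ), 0 ≤ a →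
        ((a : ℝ) : EReal) < (ExpGrowth.expGrowthInf fun n => (k n : ℝ≥0∞)) →
        ((-a : ℝ) : EReal) < (ExpGrowth.expGrowthInf fun n => μ n (baseBall 𝒴 1 p)) →
        ((-a : ℝ) : EReal) ≤ ExpGrowth.expGrowthInf fun n => μω n ω (baseBall 𝒴 3 p) := by
      refine ae_all_iff.2 fun p => ae_all_iff.2 fun a => ?_
      simp only [eventually_imp_distrib_left]
      intro ha hak haμ
      simp only [hFμ] at haμ
      simp only [hFμω]
      exact ae_le_expGrowthInf_blockEmpirical hXmeas hstat hmix hF e hη0 hclose hkpos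
        (by exact_mod_cast ha) hak (TopologicalSpace.denseSeq 𝒴 p.1) (by positivity) haμ
    filter_upwards [h] with ω hω
    exact le_expGrowthInf_of_baseBall (μ := μ) (ν := fun n => μω n ω) hkI hlower hω
  refine ⟨?_, fun htight => ⟨fun c hc => ?_, ?_⟩⟩
  · filter_upwards [hae_lower, hae_compact] with ω h1 h2
    exact ⟨h1, h2⟩
  · lift c to ℝ≥0 using hc
    exact isCompact_sublevel_of_exponentially_tight hIlsc hlower htight c
  · choose K hK hKα using htight
    have h : ∀ᵐ ω ∂P, ∀ m : ℕ, (ExpGrowth.expGrowthSup fun n => μω n ω (K m)ᶜ) ≤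
        ExpGrowth.expGrowthSup fun n => μ n (K m)ᶜ :=
      ae_all_iff.2 fun m => hsup _ (hK m).isClosed.measurableSet.compl
    filter_upwards [hae_lower, hae_compact, h] with ω h1 h2 h3 Γ
    refine ⟨h1 Γ, expGrowthSup_le_of_exponentially_tight (ν := fun n => μω n ω) h2
      (fun α => ?_) Γ⟩
    obtain ⟨m, hm⟩ := exists_nat_ge α
    refine ⟨K m, hK m, (h3 m).trans ((hKα m).trans ?_)⟩
    exact EReal.coe_le_coe_iff.2 (neg_le_neg hm)
end
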